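/- arXiv:math/0211349 — 2 statements merged into one kernel-verified Lean document; each statement's English description precedes it below -/
import Mathlib

section
/- Let g be a smooth Riemannian metric on Ω and let V = (V_i) be a smooth 1-form on Ω satisfying the gradient Ricci soliton equation: ∇_i V_j = ∇_j V_i and R_{ij} = ∇_i V_j for all 1 ≤ i,j ≤ n. Then for every 1 ≤ j ≤ n, ½ ∂_j R + R_{jk} g^{kl} V_l = 0 on Ω. -/
/- Static local-coordinate Riemannian geometry on an open set `Ω ⊆ ℝⁿ`. -/

noncomputable section
open scoped BigOperators

namespace CCS

/-- A (static) scalar field on `ℝⁿ`. -/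
abbrev SFld (n : ℕ) := (Fin n → ℝ) → ℝ

/-- A (static) 2-tensor field in local coordinates. -/
abbrev SMet (n : ℕ) := Fin n → Fin n → SFld n

variable {n : ℕ}

/-- Partial derivative `∂ᵢ`. -/
def spd (i : Fin n) (u : SFld n) : SFld n :=
  fun x => fderiv ℝ u x (Pi.single i 1)

/-- Christoffel symbols `Γ^k_{ij} = ½ g^{kl}(∂ᵢg_{jl} + ∂ⱼg_{il} − ∂ₗg_{ij})`. -/
def Gamma (g ginv : SMet n) (k i j : Fin n) : SFld n :=
  fun x => (1/2) * ∑ l, ginv k l x *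
    (spd i (g j l) x + spd j (g i l) x - spd l (g i j) x)

/-- Riemann curvature `R^l_{ijk}`. -/
def Riem (g ginv : SMet n) (l i j k : Fin n) : SFld n :=
  fun x => spd i (Gamma g ginv l j k) x - spd j (Gamma g ginv l i k) x
    + ∑ m, (Gamma g ginv m j k x * Gamma g ginv l i m x
          - Gamma g ginv m i k x * Gamma g ginv l j m x)

/-- Ricci curvature `R_{jk} = R^p_{pjk}`. -/
def Ric (g ginv : SMet n) (j k : Fin n) : SFld n :=
  fun x => ∑ p, Riem g ginv p p j k x

/-- Scalar curvature `R = g^{jk}R_{jk}`. -/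
def Scal (g ginv : SMet n) : SFld n :=
  fun x => ∑ j, ∑ k, ginv j k x * Ric g ginv j k x

/-- Covariant derivative of a 1-form: `∇ᵢω_j = ∂ᵢω_j − Γ^p_{ij}ω_p`. -/
def cd1 (g ginv : SMet n) (i : Fin n) (ω : Fin n → SFld n) (j : Fin n) : SFld n :=
  fun x => spd i (ω j) x - ∑ p, Gamma g ginv p i j x * ω p x

end CCS

/-!
View the Levi-Civita connection as a matrix-valued connection `∂ᵢ + Γᵢ` with curvature
`F_{ij} = ∂ᵢΓⱼ − ∂ⱼΓᵢ + [Γᵢ, Γⱼ]`. The inverse metric is parallel, so raising an index of `F` with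
it gives a tensor that is skew in both index pairs and still satisfies the second Bianchi identity.
Tracing that identity twice yields `∂ⱼR = 2 ∇ᵢR_jⁱ`. On a soliton the vector field `W` dual to `V`
has `∇ⱼWᵏ = R_jᵏ`, so tracing the Ricci identity `(∇ᵢ∇ⱼ − ∇ⱼ∇ᵢ) W = F_{ij} W` yields
`∇ᵢR_jⁱ − ∂ⱼR = R_{jk} Wᵏ`. Eliminating the divergence gives the claim.
-/

namespace CCS

open Filter Topology
open scoped ContDiff Matrix.Norms.L2Operator

section PartialDerivative

variable {n : ℕ} {F : Type*} [NormedAddCommGroup F] [NormedSpace ℝ F]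
  {i j : Fin n} {u v : (Fin n → ℝ) → F} {x : Fin n → ℝ}

/-- Partial derivative of a field with values in a normed space; on scalar fields it unfolds to
`spd`. -/
def pderiv (i : Fin n) (u : (Fin n → ℝ) → F) : (Fin n → ℝ) → F :=
  fun x => fderiv ℝ u x (Pi.single i 1)

lemma pderiv_add (hu : DifferentiableAt ℝ u x) (hv : DifferentiableAt ℝ v x) :
    pderiv i (fun y => u y + v y) x = pderiv i u x + pderiv i v x := by
  simp only [pderiv, fderiv_fun_add hu hv, add_apply]

lemma pderiv_sub (hu : DifferentiableAt ℝ u x) (hv : DifferentiableAt ℝ v x) :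
    pderiv i (fun y => u y - v y) x = pderiv i u x - pderiv i v x := by
  simp only [pderiv, fderiv_fun_sub hu hv, sub_apply]

lemma pderiv_neg : pderiv i (fun y => -u y) x = -pderiv i u x := by
  simp only [pderiv, fderiv_fun_neg, neg_apply]

lemma pderiv_sum {ι : Type*} [Fintype ι] {w : ι → (Fin n → ℝ) → F}
    (hw : ∀ a, DifferentiableAt ℝ (w a) x) :
    pderiv i (fun y => ∑ a, w a y) x = ∑ a, pderiv i (w a) x := by
  simp only [pderiv, fderiv_fun_sum fun a _ => hw a, sum_apply]

lemma pderiv_star [StarAddMonoid F] [StarModule ℝ F] [ContinuousStar F] :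
    pderiv i (fun y => star (u y)) x = star (pderiv i u x) := by
  simp only [pderiv, fderiv_star]
  rfl

lemma pderiv_mul {𝔸 : Type*} [NormedRing 𝔸] [NormedAlgebra ℝ 𝔸] {M N : (Fin n → ℝ) → 𝔸}
    (hM : DifferentiableAt ℝ M x) (hN : DifferentiableAt ℝ N x) :
    pderiv i (fun y => M y * N y) x = pderiv i M x * N x + M x * pderiv i N x := by
  simp [pderiv, fderiv_fun_mul' hM hN, add_comm]

lemma pderiv_clm_apply {F' : Type*} [NormedAddCommGroup F'] [NormedSpace ℝ F'] (L : F →L[ℝ] F')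
    (hu : DifferentiableAt ℝ u x) : pderiv i (fun y => L (u y)) x = L (pderiv i u x) := by
  change fderiv ℝ (L ∘ u) x _ = _
  rw [(L.hasFDerivAt.comp x hu.hasFDerivAt).fderiv]
  rfl

lemma pderiv_congr (h : u =ᶠ[𝓝 x] v) : pderiv i u x = pderiv i v x := by
  simp only [pderiv, h.fderiv_eq]

lemma contDiffAt_pderiv {k m : ℕ∞ω} (hu : ContDiffAt ℝ m u x) (hk : k + 1 ≤ m) :
    ContDiffAt ℝ k (pderiv i u) x :=
  (hu.fderiv_right hk).clm_apply contDiffAt_const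

lemma differentiableAt_pderiv (hu : ContDiffAt ℝ 2 u x) : DifferentiableAt ℝ (pderiv i u) x :=
  (contDiffAt_pderiv (k := 1) hu (by norm_num)).differentiableAt one_ne_zero

lemma pderiv_comm (hu : ContDiffAt ℝ 2 u x) :
    pderiv i (pderiv j u) x = pderiv j (pderiv i u) x := by
  have hd : DifferentiableAt ℝ (fderiv ℝ u) x :=
    (hu.fderiv_right (m := 1) (by norm_num)).differentiableAt one_ne_zero
  have second (i j : Fin n) : pderiv i (pderiv j u) x
      = fderiv ℝ (fderiv ℝ u) x (Pi.single i 1) (Pi.single j 1) := by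
    unfold pderiv
    simp [fderiv_clm_apply hd (differentiableAt_const _)]
  rw [second, second, (hu.isSymmSndFDerivAt (by simp)).eq]

end PartialDerivative

section Connection

variable {n : ℕ} {𝔸 : Type*} [NormedRing 𝔸] [NormedAlgebra ℝ 𝔸]
  {Γ : Fin n → (Fin n → ℝ) → 𝔸} {i j k : Fin n} {x : Fin n → ℝ}

/-- Curvature `F_{ij} = ∂ᵢΓⱼ − ∂ⱼΓᵢ + [Γᵢ, Γⱼ]` of the connection `∂ᵢ + Γᵢ`. -/
def curvature (Γ : Fin n → (Fin n → ℝ) → 𝔸) (i j : Fin n) : (Fin n → ℝ) → 𝔸 :=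
  fun x => pderiv i (Γ j) x - pderiv j (Γ i) x + (Γ i x * Γ j x - Γ j x * Γ i x)

/-- Covariant derivative of a section acted on by the connection from the left. -/
def covDeriv (Γ : Fin n → (Fin n → ℝ) → 𝔸) (i : Fin n) (W : (Fin n → ℝ) → 𝔸) :
    (Fin n → ℝ) → 𝔸 :=
  fun x => pderiv i W x + Γ i x * W x

lemma covDeriv_congr {W X : (Fin n → ℝ) → 𝔸} (h : W =ᶠ[𝓝 x] X) :
    covDeriv Γ i W x = covDeriv Γ i X x := by
  simp only [covDeriv, pderiv_congr h, h.eq_of_nhds]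

lemma curvature_swap : curvature Γ i j x = -curvature Γ j i x := by
  unfold curvature
  noncomm_ring

lemma contDiffAt_curvature {r m : ℕ∞ω} (hΓ : ∀ i, ContDiffAt ℝ m (Γ i) x) (hr : r + 1 ≤ m) :
    ContDiffAt ℝ r (curvature Γ i j) x := by
  have hr' (i) : ContDiffAt ℝ r (Γ i) x := (hΓ i).of_le (le_self_add.trans hr)
  exact ((contDiffAt_pderiv (hΓ j) hr).sub (contDiffAt_pderiv (hΓ i) hr)).add
    (((hr' i).mul (hr' j)).sub ((hr' j).mul (hr' i)))

lemma pderiv_curvature (hΓ : ∀ i, ContDiffAt ℝ 2 (Γ i) x) :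
    pderiv k (curvature Γ i j) x = pderiv k (pderiv i (Γ j)) x - pderiv k (pderiv j (Γ i)) x +
      ((pderiv k (Γ i) x * Γ j x + Γ i x * pderiv k (Γ j) x)
        - (pderiv k (Γ j) x * Γ i x + Γ j x * pderiv k (Γ i) x)) := by
  have h (i) : DifferentiableAt ℝ (Γ i) x := (hΓ i).differentiableAt two_ne_zero
  have h' (i j) : DifferentiableAt ℝ (pderiv i (Γ j)) x := differentiableAt_pderiv (hΓ j)
  unfold curvature
  rw [pderiv_add ((h' i j).fun_sub (h' j i)) (((h i).fun_mul (h j)).fun_sub ((h j).fun_mul (h i))),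
    pderiv_sub (h' i j) (h' j i), pderiv_sub ((h i).fun_mul (h j)) ((h j).fun_mul (h i)),
    pderiv_mul (h i) (h j), pderiv_mul (h j) (h i)]

theorem second_bianchi (hΓ : ∀ i, ContDiffAt ℝ 2 (Γ i) x) :
    (pderiv k (curvature Γ i j) x + Γ k x * curvature Γ i j x - curvature Γ i j x * Γ k x)
    + (pderiv i (curvature Γ j k) x + Γ i x * curvature Γ j k x - curvature Γ j k x * Γ i x)
    + (pderiv j (curvature Γ k i) x + Γ j x * curvature Γ k i x - curvature Γ k i x * Γ j x)
      = 0 := by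
  rw [pderiv_curvature hΓ, pderiv_curvature hΓ, pderiv_curvature hΓ,
    pderiv_comm (i := k) (j := i) (hΓ j), pderiv_comm (i := k) (j := j) (hΓ i),
    pderiv_comm (i := i) (j := j) (hΓ k)]
  unfold curvature
  noncomm_ring

theorem ricci_identity {W : (Fin n → ℝ) → 𝔸} (hΓ : ∀ i, DifferentiableAt ℝ (Γ i) x)
    (hW : ContDiffAt ℝ 2 W x) :
    covDeriv Γ i (covDeriv Γ j W) x - covDeriv Γ j (covDeriv Γ i W) x
      = curvature Γ i j x * W x := by
  have hW₁ : DifferentiableAt ℝ W x := hW.differentiableAt two_ne_zero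
  have hW₂ (i) : DifferentiableAt ℝ (pderiv i W) x := differentiableAt_pderiv hW
  have expand (i j) : pderiv i (covDeriv Γ j W) x
      = pderiv i (pderiv j W) x + (pderiv i (Γ j) x * W x + Γ j x * pderiv i W x) := by
    unfold covDeriv
    rw [pderiv_add (hW₂ j) ((hΓ j).fun_mul hW₁), pderiv_mul (hΓ j) hW₁]
  change pderiv i (covDeriv Γ j W) x + _ - (pderiv j (covDeriv Γ i W) x + _) = _
  rw [expand, expand, pderiv_comm (i := i) hW]
  unfold covDeriv curvature
  noncomm_ring

variable [StarRing 𝔸]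

/-- Covariant derivative of a contravariant 2-tensor, on which the connection acts through both
indices: `∇ᵢM = ∂ᵢM + ΓᵢM + MΓᵢ*`. -/
def covDeriv₂ (Γ : Fin n → (Fin n → ℝ) → 𝔸) (i : Fin n) (M : (Fin n → ℝ) → 𝔸) :
    (Fin n → ℝ) → 𝔸 :=
  fun x => pderiv i M x + Γ i x * M x + M x * star (Γ i x)

variable {M H : (Fin n → ℝ) → 𝔸}

lemma covDeriv₂_neg : covDeriv₂ Γ i (fun y => -M y) x = -covDeriv₂ Γ i M x := by
  unfold covDeriv₂
  rw [pderiv_neg]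
  noncomm_ring

lemma covDeriv₂_congr {N : (Fin n → ℝ) → 𝔸} (h : M =ᶠ[𝓝 x] N) :
    covDeriv₂ Γ i M x = covDeriv₂ Γ i N x := by
  simp only [covDeriv₂, pderiv_congr h, h.eq_of_nhds]

theorem second_bianchi_raised (hΓ : ∀ i, ContDiffAt ℝ 2 (Γ i) x) (hH : DifferentiableAt ℝ H x)
    (hpar : ∀ i, covDeriv₂ Γ i H x = 0) :
    covDeriv₂ Γ k (fun y => curvature Γ i j y * H y) x
    + covDeriv₂ Γ i (fun y => curvature Γ j k y * H y) x
    + covDeriv₂ Γ j (fun y => curvature Γ k i y * H y) x = 0 := by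
  have leibniz (k i j) : covDeriv₂ Γ k (fun y => curvature Γ i j y * H y) x
      = (pderiv k (curvature Γ i j) x + Γ k x * curvature Γ i j x
        - curvature Γ i j x * Γ k x) * H x + curvature Γ i j x * covDeriv₂ Γ k H x := by
    unfold covDeriv₂
    rw [pderiv_mul ((contDiffAt_curvature (r := 1) hΓ (by norm_num)).differentiableAt
      one_ne_zero) hH]
    noncomm_ring
  simp only [leibniz, hpar, mul_zero, add_zero, ← add_mul, second_bianchi hΓ, zero_mul]

variable [StarModule ℝ 𝔸] [ContinuousStar 𝔸]

lemma star_covDeriv₂ :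
    star (covDeriv₂ Γ i M x) = covDeriv₂ Γ i (fun y => star (M y)) x := by
  simp only [covDeriv₂, pderiv_star, star_add, star_mul, star_star]
  abel

theorem ricci_identity₂ (hΓ : ∀ i, DifferentiableAt ℝ (Γ i) x) (hM : ContDiffAt ℝ 2 M x) :
    covDeriv₂ Γ i (covDeriv₂ Γ j M) x - covDeriv₂ Γ j (covDeriv₂ Γ i M) x
      = curvature Γ i j x * M x + M x * star (curvature Γ i j x) := by
  have hM₁ : DifferentiableAt ℝ M x := hM.differentiableAt two_ne_zero
  have hM₂ (i) : DifferentiableAt ℝ (pderiv i M) x := differentiableAt_pderiv hM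
  have expand (i j) : pderiv i (covDeriv₂ Γ j M) x = pderiv i (pderiv j M) x
      + (pderiv i (Γ j) x * M x + Γ j x * pderiv i M x)
      + (pderiv i M x * star (Γ j x) + M x * star (pderiv i (Γ j) x)) := by
    unfold covDeriv₂
    rw [pderiv_add ((hM₂ j).fun_add ((hΓ j).fun_mul hM₁)) (hM₁.fun_mul (hΓ j).star),
      pderiv_add (hM₂ j) ((hΓ j).fun_mul hM₁), pderiv_mul (hΓ j) hM₁, pderiv_mul hM₁ (hΓ j).star,
      pderiv_star]
  change pderiv i (covDeriv₂ Γ j M) x + _ + _ - (pderiv j (covDeriv₂ Γ i M) x + _ + _) = _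
  rw [expand, expand, pderiv_comm (i := i) hM]
  simp only [covDeriv₂, curvature, star_add, star_sub, star_mul]
  noncomm_ring

theorem star_curvature_mul_of_parallel (hΓ : ∀ i, DifferentiableAt ℝ (Γ i) x)
    (hH : ContDiffAt ℝ 2 H x) (hsa : IsSelfAdjoint (H x))
    (hpar : ∀ i, covDeriv₂ Γ i H =ᶠ[𝓝 x] 0) :
    star (curvature Γ i j x * H x) = -(curvature Γ i j x * H x) := by
  have hzero (i j) : covDeriv₂ Γ i (covDeriv₂ Γ j H) x = 0 := by
    rw [covDeriv₂_congr (hpar j)]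
    simp [covDeriv₂, pderiv]
  have h := ricci_identity₂ (i := i) (j := j) hΓ hH
  rw [hzero, hzero, sub_zero] at h
  rw [star_mul, hsa.star_eq, eq_neg_iff_add_eq_zero, add_comm, ← h]

end Connection

section Inverse

variable {n : ℕ} {𝔸 : Type*} [NormedRing 𝔸] [NormedAlgebra ℝ 𝔸] {Γ : Fin n → (Fin n → ℝ) → 𝔸}
  {G H : (Fin n → ℝ) → 𝔸} {i : Fin n} {x : Fin n → ℝ}

lemma contDiffAt_of_mul_eq_one [CompleteSpace 𝔸] {m : ℕ∞ω} (hG : ContDiffAt ℝ m G x)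
    (hGH : ∀ᶠ y in 𝓝 x, G y * H y = 1) (hHG : ∀ᶠ y in 𝓝 x, H y * G y = 1) :
    ContDiffAt ℝ m H x := by
  let U : 𝔸ˣ := ⟨G x, H x, hGH.self_of_nhds, hHG.self_of_nhds⟩
  have hinv : ContDiffAt ℝ m (fun y => Ring.inverse (G y)) x :=
    (contDiffAt_ringInverse ℝ U).comp x hG
  refine hinv.congr_of_eventuallyEq ?_
  filter_upwards [hGH, hHG] with y hy hy'
  exact (Ring.inverse_unit ⟨G y, H y, hy, hy'⟩).symm

lemma covDeriv₂_inverse_eq_zero [StarRing 𝔸] (hG : DifferentiableAt ℝ G x)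
    (hH : DifferentiableAt ℝ H x) (hGH : ∀ᶠ y in 𝓝 x, G y * H y = 1) (hHG : H x * G x = 1)
    (hcompat : pderiv i G x = star (Γ i x) * G x + G x * Γ i x) :
    covDeriv₂ Γ i H x = 0 := by
  have hGH' : G x * H x = 1 := hGH.self_of_nhds
  have hderiv : pderiv i G x * H x + G x * pderiv i H x = 0 := by
    rw [← pderiv_mul hG hH, pderiv_congr (v := fun _ => 1) hGH]
    simp [pderiv]
  calc covDeriv₂ Γ i H x
      = (H x * G x) * pderiv i H x + (H x * G x) * Γ i x * H x
          + H x * star (Γ i x) * (G x * H x) := by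
        simp only [covDeriv₂, hHG, hGH', one_mul, mul_one]
    _ = H x * (pderiv i G x * H x + G x * pderiv i H x) := by
        rw [hcompat]
        noncomm_ring
    _ = 0 := by rw [hderiv, mul_zero]

/-- Raising an index by a parallel `H` commutes with covariant differentiation; on covectors the
connection acts by `-Γᵢ*`. -/
lemma covDeriv_mul_of_parallel [StarRing 𝔸] {α : (Fin n → ℝ) → 𝔸} (hH : DifferentiableAt ℝ H x)
    (hα : DifferentiableAt ℝ α x) (hpar : covDeriv₂ Γ i H x = 0) :
    covDeriv Γ i (fun y => H y * α y) x = H x * (pderiv i α x - star (Γ i x) * α x) := by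
  have hsplit : covDeriv Γ i (fun y => H y * α y) x
      = covDeriv₂ Γ i H x * α x + H x * (pderiv i α x - star (Γ i x) * α x) := by
    unfold covDeriv covDeriv₂
    rw [pderiv_mul hH hα]
    noncomm_ring
  rw [hsplit, hpar, zero_mul, zero_add]

end Inverse

section Contraction

/-- Contracting `l = i`, `k = j` in the cyclic identity turns the last two terms into equal ones. -/
lemma sum_eq_two_mul_sum_of_cyclic {ι R : Type*} [Fintype ι] [CommRing R]
    {T : ι → ι → ι → Matrix ι ι R} (hswap : ∀ a i j, T a i j = -T a j i)
    (hskew : ∀ a i j l k, T a i j k l = -T a i j l k)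
    (hcyc : ∀ a i j, T a i j + T i j a + T j a i = 0) (a : ι) :
    ∑ i, ∑ j, T a i j i j = 2 * ∑ i, ∑ j, T i j a j i := by
  have hterm (i j) : T a i j i j = T i j a j i + T j i a i j := by
    have h := congrFun₂ (hcyc a i j) i j
    rw [hswap j a i] at h
    simp only [Matrix.add_apply, Matrix.neg_apply, Matrix.zero_apply] at h
    rw [hskew i j a i j]
    linear_combination h
  simp only [hterm, Finset.sum_add_distrib]
  rw [Finset.sum_comm (f := fun i j => T j i a i j), two_mul]

end Contraction

section MatrixField

variable {n : ℕ} {ι : Type*} [Fintype ι] [DecidableEq ι] {M : (Fin n → ℝ) → Matrix ι ι ℝ}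
  {x : Fin n → ℝ}

lemma contDiffAt_matrix {m : ℕ∞ω} :
    ContDiffAt ℝ m M x ↔ ∀ a b, ContDiffAt ℝ m (fun y => M y a b) x := by
  rw [← (Matrix.ofLinearEquiv ℝ).symm.toContinuousLinearEquiv.comp_contDiffAt_iff, contDiffAt_pi]
  exact forall_congr' fun a => contDiffAt_pi

lemma pderiv_apply_apply {i : Fin n} (hM : DifferentiableAt ℝ M x) (a b : ι) :
    pderiv i M x a b = spd i (fun y => M y a b) x :=
  (pderiv_clm_apply (Matrix.entryLinearMap ℝ ℝ a b).toContinuousLinearMap hM).symm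

end MatrixField

/-- A `C³` pseudo-Riemannian metric `g` on the open set `Ω`, together with its inverse matrix
`ginv`; three derivatives are what the second Bianchi identity involves. -/
structure IsPseudoMetricOn {n : ℕ} (Ω : Set (Fin n → ℝ)) (g ginv : SMet n) : Prop where
  isOpen : IsOpen Ω
  contDiffOn : ∀ i j, ContDiffOn ℝ 3 (g i j) Ω
  symm : ∀ x ∈ Ω, ∀ i j, g i j x = g j i x
  mul_inv : ∀ x ∈ Ω, ∀ i j, ∑ k, g i k x * ginv k j x = if i = j then 1 else 0

variable {n : ℕ} {g ginv : SMet n} {Ω : Set (Fin n → ℝ)} {x : Fin n → ℝ} {i j : Fin n}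

/-- A 2-tensor field viewed as a matrix-valued field. -/
def tensorMatrix (g : SMet n) : (Fin n → ℝ) → Matrix (Fin n) (Fin n) ℝ :=
  fun x => Matrix.of fun i j => g i j x

/-- The matrices `(Γᵢ)ˡₖ = Γˡᵢₖ` of the Levi-Civita connection. -/
def christoffelMatrix (g ginv : SMet n) (i : Fin n) : (Fin n → ℝ) → Matrix (Fin n) (Fin n) ℝ :=
  fun x => Matrix.of fun l k => Gamma g ginv l i k x

/-- A vector or covector field as a matrix field with constant rows, so that matrix fields act on it
from the left within a single algebra. -/
def colMatrix (α : Fin n → SFld n) : (Fin n → ℝ) → Matrix (Fin n) (Fin n) ℝ :=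
  fun x => Matrix.replicateCol (Fin n) fun k => α k x

/-- Curvature `R_{ij}{}^{lk} = Rˡ_{ijm} gᵐᵏ` with the last index raised, as a matrix in `l`, `k`. -/
def raisedRiem (g ginv : SMet n) (i j : Fin n) : (Fin n → ℝ) → Matrix (Fin n) (Fin n) ℝ :=
  fun x => curvature (christoffelMatrix g ginv) i j x * tensorMatrix ginv x

/-- Ricci curvature `R_jᵏ` with the second index raised. -/
def mixedRic (g ginv : SMet n) (j k : Fin n) : SFld n :=
  fun x => ∑ l, ginv k l x * Ric g ginv j l x

/-- Divergence `∇ᵢ R_jⁱ` of the Ricci curvature. -/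
def divRic (g ginv : SMet n) (j : Fin n) : SFld n :=
  fun x => ∑ i, (spd i (mixedRic g ginv j i) x + ∑ m, Gamma g ginv i i m x * mixedRic g ginv j m x
    - ∑ m, Gamma g ginv m i j x * mixedRic g ginv m i x)

lemma raisedRiem_swap : raisedRiem g ginv i j x = -raisedRiem g ginv j i x := by
  simp only [raisedRiem, curvature_swap (i := i), neg_mul]

lemma covDeriv₂_raisedRiem_swap (a i j : Fin n) :
    covDeriv₂ (christoffelMatrix g ginv) a (raisedRiem g ginv i j) x
      = -covDeriv₂ (christoffelMatrix g ginv) a (raisedRiem g ginv j i) x := by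
  rw [← covDeriv₂_neg]
  exact covDeriv₂_congr (.of_forall fun _ => raisedRiem_swap)

lemma covDeriv₂_raisedRiem_apply (a i j l k : Fin n) :
    covDeriv₂ (christoffelMatrix g ginv) a (raisedRiem g ginv i j) x l k
      = pderiv a (raisedRiem g ginv i j) x l k
        + ∑ m, Gamma g ginv l a m x * raisedRiem g ginv i j x m k
        + ∑ m, Gamma g ginv k a m x * raisedRiem g ginv i j x l m := by
  simp only [covDeriv₂, Matrix.add_apply, Matrix.mul_apply, Matrix.star_apply, star_trivial,
    mul_comm (raisedRiem g ginv i j x l _)]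
  rfl

section ColMatrix

variable {X : Fin n → SFld n}

lemma contDiffAt_colMatrix {m : ℕ∞ω} (hX : ∀ k, ContDiffAt ℝ m (X k) x) :
    ContDiffAt ℝ m (colMatrix X) x :=
  contDiffAt_matrix.2 fun k _ => hX k

lemma covDeriv_colMatrix_apply (hX : DifferentiableAt ℝ (colMatrix X) x) (i l c : Fin n) :
    covDeriv (christoffelMatrix g ginv) i (colMatrix X) x l c
      = spd i (X l) x + ∑ m, Gamma g ginv l i m x * X m x := by
  simp only [covDeriv, Matrix.add_apply, pderiv_apply_apply hX, Matrix.mul_apply]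
  rfl

lemma colMatrix_cd1 (hX : DifferentiableAt ℝ (colMatrix X) x) (i : Fin n) :
    colMatrix (cd1 g ginv i X) x
      = pderiv i (colMatrix X) x - star (christoffelMatrix g ginv i x) * colMatrix X x := by
  ext k c
  simp only [Matrix.sub_apply, pderiv_apply_apply hX, Matrix.mul_apply]
  rfl

lemma colMatrix_mixedRic :
    colMatrix (mixedRic g ginv j) x = tensorMatrix ginv x * colMatrix (Ric g ginv j) x := by
  ext k c
  simp only [Matrix.mul_apply]
  rfl

end ColMatrix

namespace IsPseudoMetricOn

lemma contDiffAt_tensorMatrix (hg : IsPseudoMetricOn Ω g ginv) (hx : x ∈ Ω) :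
    ContDiffAt ℝ 3 (tensorMatrix g) x :=
  contDiffAt_matrix.2 fun i j => (hg.contDiffOn i j).contDiffAt (hg.isOpen.mem_nhds hx)

lemma tensorMatrix_mul_inv (hg : IsPseudoMetricOn Ω g ginv) (hx : x ∈ Ω) :
    tensorMatrix g x * tensorMatrix ginv x = 1 := by
  ext i j
  rw [Matrix.mul_apply, Matrix.one_apply]
  exact hg.mul_inv x hx i j

lemma inv_mul_tensorMatrix (hg : IsPseudoMetricOn Ω g ginv) (hx : x ∈ Ω) :
    tensorMatrix ginv x * tensorMatrix g x = 1 :=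
  mul_eq_one_comm.mp (hg.tensorMatrix_mul_inv hx)

lemma isSelfAdjoint_tensorMatrix (hg : IsPseudoMetricOn Ω g ginv) (hx : x ∈ Ω) :
    IsSelfAdjoint (tensorMatrix g x) := by
  ext i j
  exact hg.symm x hx j i

lemma isSelfAdjoint_tensorMatrix_inv (hg : IsPseudoMetricOn Ω g ginv) (hx : x ∈ Ω) :
    IsSelfAdjoint (tensorMatrix ginv x) := by
  rw [← Matrix.inv_eq_right_inv (hg.tensorMatrix_mul_inv hx)]
  exact Matrix.IsHermitian.inv (hg.isSelfAdjoint_tensorMatrix hx)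

lemma contDiffAt_tensorMatrix_inv (hg : IsPseudoMetricOn Ω g ginv) (hx : x ∈ Ω) :
    ContDiffAt ℝ 3 (tensorMatrix ginv) x :=
  have : CompleteSpace (Matrix (Fin n) (Fin n) ℝ) := FiniteDimensional.complete ℝ _
  contDiffAt_of_mul_eq_one (hg.contDiffAt_tensorMatrix hx)
    (eventually_of_mem (hg.isOpen.mem_nhds hx) fun _ => hg.tensorMatrix_mul_inv)
    (eventually_of_mem (hg.isOpen.mem_nhds hx) fun _ => hg.inv_mul_tensorMatrix)

lemma contDiffAt_christoffelMatrix (hg : IsPseudoMetricOn Ω g ginv) (hx : x ∈ Ω) (i : Fin n) :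
    ContDiffAt ℝ 2 (christoffelMatrix g ginv i) x := by
  have hinv (a b) : ContDiffAt ℝ 2 (ginv a b) x :=
    contDiffAt_matrix.1 ((hg.contDiffAt_tensorMatrix_inv hx).of_le (by norm_num)) a b
  have hspd (i a b) : ContDiffAt ℝ 2 (spd i (g a b)) x :=
    contDiffAt_pderiv ((hg.contDiffOn a b).contDiffAt (hg.isOpen.mem_nhds hx)) (by norm_num)
  refine contDiffAt_matrix.2 fun l k => contDiffAt_const.mul (ContDiffAt.sum fun m _ => ?_)
  exact (hinv l m).mul (((hspd _ _ _).add (hspd _ _ _)).sub (hspd _ _ _))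

lemma spd_symm (hg : IsPseudoMetricOn Ω g ginv) (hx : x ∈ Ω) (k i j : Fin n) :
    spd k (g i j) x = spd k (g j i) x :=
  pderiv_congr (eventually_of_mem (hg.isOpen.mem_nhds hx) fun y hy => hg.symm y hy i j)

lemma Gamma_symm (hg : IsPseudoMetricOn Ω g ginv) (hx : x ∈ Ω) (l i k : Fin n) :
    Gamma g ginv l i k x = Gamma g ginv l k i x := by
  simp only [Gamma, hg.spd_symm hx _ i k, add_comm (spd i (g k _) x)]

lemma tensorMatrix_mul_christoffelMatrix (hg : IsPseudoMetricOn Ω g ginv) (hx : x ∈ Ω)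
    (i j k : Fin n) : (tensorMatrix g x * christoffelMatrix g ginv i x) j k =
      (1 / 2) * (spd i (g k j) x + spd k (g i j) x - spd j (g i k) x) := by
  have hΓ : christoffelMatrix g ginv i x = tensorMatrix ginv x * Matrix.of fun m k =>
      (1 / 2) * (spd i (g k m) x + spd k (g i m) x - spd m (g i k) x) := by
    ext l k
    simp only [christoffelMatrix, tensorMatrix, Gamma, Matrix.mul_apply, Matrix.of_apply,
      Finset.mul_sum]
    exact Finset.sum_congr rfl fun m _ => by ring
  rw [hΓ, ← Matrix.mul_assoc, hg.tensorMatrix_mul_inv hx, Matrix.one_mul, Matrix.of_apply]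

theorem pderiv_tensorMatrix (hg : IsPseudoMetricOn Ω g ginv) (hx : x ∈ Ω) (i : Fin n) :
    pderiv i (tensorMatrix g) x = star (christoffelMatrix g ginv i x) * tensorMatrix g x
      + tensorMatrix g x * christoffelMatrix g ginv i x := by
  have hstar : star (christoffelMatrix g ginv i x) * tensorMatrix g x
      = star (tensorMatrix g x * christoffelMatrix g ginv i x) := by
    rw [star_mul, (hg.isSelfAdjoint_tensorMatrix hx).star_eq]
  ext j k
  rw [hstar, pderiv_apply_apply ((hg.contDiffAt_tensorMatrix hx).differentiableAt three_ne_zero),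
    Matrix.add_apply, Matrix.star_apply, hg.tensorMatrix_mul_christoffelMatrix hx,
    hg.tensorMatrix_mul_christoffelMatrix hx, star_trivial, hg.spd_symm hx i k j,
    hg.spd_symm hx j i k, hg.spd_symm hx k i j]
  change spd i (g j k) x = _
  ring

theorem covDeriv₂_tensorMatrix_inv (hg : IsPseudoMetricOn Ω g ginv) (hx : x ∈ Ω) (i : Fin n) :
    covDeriv₂ (christoffelMatrix g ginv) i (tensorMatrix ginv) x = 0 :=
  covDeriv₂_inverse_eq_zero ((hg.contDiffAt_tensorMatrix hx).differentiableAt three_ne_zero)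
    ((hg.contDiffAt_tensorMatrix_inv hx).differentiableAt three_ne_zero)
    (eventually_of_mem (hg.isOpen.mem_nhds hx) fun _ => hg.tensorMatrix_mul_inv)
    (hg.inv_mul_tensorMatrix hx) (hg.pderiv_tensorMatrix hx i)

lemma curvature_christoffelMatrix_apply (hg : IsPseudoMetricOn Ω g ginv) (hx : x ∈ Ω)
    (i j l k : Fin n) :
    curvature (christoffelMatrix g ginv) i j x l k = Riem g ginv l i j k x := by
  have hΓ (i) := (hg.contDiffAt_christoffelMatrix hx i).differentiableAt two_ne_zero
  simp only [curvature, Riem, Matrix.add_apply, Matrix.sub_apply, Matrix.mul_apply,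
    pderiv_apply_apply (hΓ _), Finset.sum_sub_distrib, christoffelMatrix, Matrix.of_apply, mul_comm]

lemma contDiffAt_raisedRiem (hg : IsPseudoMetricOn Ω g ginv) (hx : x ∈ Ω) (i j : Fin n) :
    ContDiffAt ℝ 1 (raisedRiem g ginv i j) x :=
  (contDiffAt_curvature (hg.contDiffAt_christoffelMatrix hx) (by norm_num)).mul
    ((hg.contDiffAt_tensorMatrix_inv hx).of_le (by norm_num))

lemma star_raisedRiem (hg : IsPseudoMetricOn Ω g ginv) (hx : x ∈ Ω) (i j : Fin n) :
    star (raisedRiem g ginv i j x) = -raisedRiem g ginv i j x :=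
  star_curvature_mul_of_parallel
    (fun i => (hg.contDiffAt_christoffelMatrix hx i).differentiableAt two_ne_zero)
    ((hg.contDiffAt_tensorMatrix_inv hx).of_le (by norm_num))
    (hg.isSelfAdjoint_tensorMatrix_inv hx)
    fun i => eventually_of_mem (hg.isOpen.mem_nhds hx) fun _ hy =>
      hg.covDeriv₂_tensorMatrix_inv hy i

lemma raisedRiem_apply_swap (hg : IsPseudoMetricOn Ω g ginv) (hx : x ∈ Ω) (i j l k : Fin n) :
    raisedRiem g ginv i j x k l = -raisedRiem g ginv i j x l k :=
  congrFun₂ (hg.star_raisedRiem hx i j) l k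

lemma mixedRic_eq_sum_raisedRiem (hg : IsPseudoMetricOn Ω g ginv) (hx : x ∈ Ω) (j k : Fin n) :
    mixedRic g ginv j k x = ∑ p, raisedRiem g ginv p j x p k := by
  have hsymm (l) : ginv k l x = ginv l k x :=
    congrFun₂ (hg.isSelfAdjoint_tensorMatrix_inv hx) l k
  simp only [mixedRic, Ric, raisedRiem, Matrix.mul_apply, hg.curvature_christoffelMatrix_apply hx,
    tensorMatrix, Matrix.of_apply, hsymm, Finset.mul_sum, mul_comm]
  exact Finset.sum_comm

lemma sum_mul_raisedRiem (hg : IsPseudoMetricOn Ω g ginv) (hx : x ∈ Ω) (j : Fin n)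
    (f : Fin n → ℝ) :
    ∑ i, ∑ m, f m * raisedRiem g ginv i j x i m = ∑ m, f m * mixedRic g ginv j m x := by
  rw [Finset.sum_comm]
  simp only [hg.mixedRic_eq_sum_raisedRiem hx, Finset.mul_sum]

lemma mixedRic_eventuallyEq (hg : IsPseudoMetricOn Ω g ginv) (hx : x ∈ Ω) (j k : Fin n) :
    mixedRic g ginv j k =ᶠ[𝓝 x] fun y => ∑ p, raisedRiem g ginv p j y p k :=
  eventually_of_mem (hg.isOpen.mem_nhds hx) fun _ hy => hg.mixedRic_eq_sum_raisedRiem hy j k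

lemma contDiffAt_mixedRic (hg : IsPseudoMetricOn Ω g ginv) (hx : x ∈ Ω) (j k : Fin n) :
    ContDiffAt ℝ 1 (mixedRic g ginv j k) x :=
  (ContDiffAt.sum fun p _ =>
    contDiffAt_matrix.1 (hg.contDiffAt_raisedRiem hx p j) p k).congr_of_eventuallyEq
      (hg.mixedRic_eventuallyEq hx j k)

lemma spd_mixedRic (hg : IsPseudoMetricOn Ω g ginv) (hx : x ∈ Ω) (i j k : Fin n) :
    spd i (mixedRic g ginv j k) x = ∑ p, pderiv i (raisedRiem g ginv p j) x p k := by
  have hA (p) := (hg.contDiffAt_raisedRiem hx p j).differentiableAt one_ne_zero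
  simp only [pderiv_apply_apply (hA _)]
  exact (pderiv_congr (hg.mixedRic_eventuallyEq hx j k)).trans
    (pderiv_sum fun p =>
      (contDiffAt_matrix.1 (hg.contDiffAt_raisedRiem hx p j) p k).differentiableAt one_ne_zero)

lemma spd_Scal (hg : IsPseudoMetricOn Ω g ginv) (hx : x ∈ Ω) (j : Fin n) :
    spd j (Scal g ginv) x = ∑ i, spd j (mixedRic g ginv i i) x :=
  pderiv_sum fun i => (hg.contDiffAt_mixedRic hx i i).differentiableAt one_ne_zero

theorem second_bianchi (hg : IsPseudoMetricOn Ω g ginv) (hx : x ∈ Ω) (a i j : Fin n) :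
    covDeriv₂ (christoffelMatrix g ginv) a (raisedRiem g ginv i j) x
    + covDeriv₂ (christoffelMatrix g ginv) i (raisedRiem g ginv j a) x
    + covDeriv₂ (christoffelMatrix g ginv) j (raisedRiem g ginv a i) x = 0 :=
  second_bianchi_raised (hg.contDiffAt_christoffelMatrix hx)
    ((hg.contDiffAt_tensorMatrix_inv hx).differentiableAt three_ne_zero)
    (hg.covDeriv₂_tensorMatrix_inv hx)

lemma covDeriv₂_raisedRiem_apply_swap (hg : IsPseudoMetricOn Ω g ginv) (hx : x ∈ Ω)
    (a i j l k : Fin n) :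
    covDeriv₂ (christoffelMatrix g ginv) a (raisedRiem g ginv i j) x k l
      = -covDeriv₂ (christoffelMatrix g ginv) a (raisedRiem g ginv i j) x l k := by
  have hstar : star (covDeriv₂ (christoffelMatrix g ginv) a (raisedRiem g ginv i j) x)
      = -covDeriv₂ (christoffelMatrix g ginv) a (raisedRiem g ginv i j) x := by
    rw [star_covDeriv₂, ← covDeriv₂_neg]
    exact covDeriv₂_congr (eventually_of_mem (hg.isOpen.mem_nhds hx) fun _ hy =>
      hg.star_raisedRiem hy i j)
  exact congrFun₂ hstar l k

lemma sum_Gamma_mul_mixedRic (hg : IsPseudoMetricOn Ω g ginv) (hx : x ∈ Ω) (j : Fin n) :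
    ∑ i, ∑ m, Gamma g ginv i j m x * mixedRic g ginv i m x
      = ∑ i, ∑ m, Gamma g ginv m i j x * mixedRic g ginv m i x := by
  rw [Finset.sum_comm]
  simp only [hg.Gamma_symm hx _ j]

lemma sum_covDeriv₂_raisedRiem (hg : IsPseudoMetricOn Ω g ginv) (hx : x ∈ Ω) (a : Fin n) :
    ∑ i, ∑ j, covDeriv₂ (christoffelMatrix g ginv) a (raisedRiem g ginv i j) x i j
      = spd a (Scal g ginv) x
        + 2 * ∑ i, ∑ m, Gamma g ginv i a m x * mixedRic g ginv i m x := by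
  have hderiv : ∑ i, ∑ j, pderiv a (raisedRiem g ginv i j) x i j = spd a (Scal g ginv) x := by
    rw [hg.spd_Scal hx, Finset.sum_comm]
    simp only [hg.spd_mixedRic hx]
  have hpair (i j m) : raisedRiem g ginv i j x m j = raisedRiem g ginv j i x j m := by
    rw [hg.raisedRiem_apply_swap hx, raisedRiem_swap, Matrix.neg_apply, neg_neg]
  have hΓleft : ∑ i, ∑ j, ∑ m, Gamma g ginv i a m x * raisedRiem g ginv i j x m j
      = ∑ i, ∑ m, Gamma g ginv i a m x * mixedRic g ginv i m x := by
    refine Finset.sum_congr rfl fun i _ => .trans ?_ (hg.sum_mul_raisedRiem hx i _)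
    exact Finset.sum_congr rfl fun j _ => Finset.sum_congr rfl fun m _ => by rw [hpair]
  have hΓright : ∑ i, ∑ j, ∑ m, Gamma g ginv j a m x * raisedRiem g ginv i j x i m
      = ∑ j, ∑ m, Gamma g ginv j a m x * mixedRic g ginv j m x := by
    rw [Finset.sum_comm]
    exact Finset.sum_congr rfl fun j _ => hg.sum_mul_raisedRiem hx j _
  simp only [covDeriv₂_raisedRiem_apply, Finset.sum_add_distrib]
  rw [hderiv, hΓleft, hΓright]
  ring

lemma sum_Gamma_mul_raisedRiem_eq_zero (hg : IsPseudoMetricOn Ω g ginv) (hx : x ∈ Ω)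
    (a j : Fin n) : ∑ i, ∑ m, Gamma g ginv j i m x * raisedRiem g ginv j a x m i = 0 := by
  refine self_eq_neg.mp ?_
  nth_rw 1 [Finset.sum_comm]
  simp only [← Finset.sum_neg_distrib]
  refine Finset.sum_congr rfl fun i _ => Finset.sum_congr rfl fun m _ => ?_
  rw [hg.Gamma_symm hx, hg.raisedRiem_apply_swap hx, mul_neg]

lemma sum_covDeriv₂_raisedRiem_div (hg : IsPseudoMetricOn Ω g ginv) (hx : x ∈ Ω) (a : Fin n) :
    ∑ i, ∑ j, covDeriv₂ (christoffelMatrix g ginv) i (raisedRiem g ginv j a) x j i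
      = ∑ i, (spd i (mixedRic g ginv a i) x
        + ∑ m, Gamma g ginv i i m x * mixedRic g ginv a m x) := by
  have hΓleft : ∑ i, ∑ j, ∑ m, Gamma g ginv j i m x * raisedRiem g ginv j a x m i = 0 := by
    rw [Finset.sum_comm]
    exact Finset.sum_eq_zero fun j _ => hg.sum_Gamma_mul_raisedRiem_eq_zero hx a j
  have hΓright (i) : ∑ j, ∑ m, Gamma g ginv i i m x * raisedRiem g ginv j a x j m
      = ∑ m, Gamma g ginv i i m x * mixedRic g ginv a m x := hg.sum_mul_raisedRiem hx a _
  simp only [covDeriv₂_raisedRiem_apply, Finset.sum_add_distrib, hΓleft, add_zero, hΓright,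
    hg.spd_mixedRic hx]

theorem contracted_bianchi (hg : IsPseudoMetricOn Ω g ginv) (hx : x ∈ Ω) (j : Fin n) :
    spd j (Scal g ginv) x = 2 * divRic g ginv j x := by
  have h := sum_eq_two_mul_sum_of_cyclic
    (T := fun a i j => covDeriv₂ (christoffelMatrix g ginv) a (raisedRiem g ginv i j) x)
    covDeriv₂_raisedRiem_swap (hg.covDeriv₂_raisedRiem_apply_swap hx) (hg.second_bianchi hx) j
  rw [hg.sum_covDeriv₂_raisedRiem hx, hg.sum_covDeriv₂_raisedRiem_div hx,
    hg.sum_Gamma_mul_mixedRic hx] at h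
  simp only [divRic, Finset.sum_sub_distrib]
  linear_combination h

lemma differentiableAt_colMatrix_mixedRic (hg : IsPseudoMetricOn Ω g ginv) (hx : x ∈ Ω)
    (j : Fin n) : DifferentiableAt ℝ (colMatrix (mixedRic g ginv j)) x :=
  (contDiffAt_colMatrix fun k => hg.contDiffAt_mixedRic hx j k).differentiableAt one_ne_zero

lemma sum_curvature_mul_apply (hg : IsPseudoMetricOn Ω g ginv) (hx : x ∈ Ω) (j : Fin n)
    (M : Matrix (Fin n) (Fin n) ℝ) (c : Fin n) :
    ∑ i, (curvature (christoffelMatrix g ginv) i j x * M) i c = ∑ k, Ric g ginv j k x * M k c := by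
  simp only [Matrix.mul_apply, hg.curvature_christoffelMatrix_apply hx, Ric, Finset.sum_mul]
  exact Finset.sum_comm

lemma sum_covDeriv_mixedRic (hg : IsPseudoMetricOn Ω g ginv) (hx : x ∈ Ω) (j c : Fin n) :
    ∑ i, (covDeriv (christoffelMatrix g ginv) i (colMatrix (mixedRic g ginv j)) x
        - covDeriv (christoffelMatrix g ginv) j (colMatrix (mixedRic g ginv i)) x) i c
      = divRic g ginv j x - spd j (Scal g ginv) x := by
  simp only [Matrix.sub_apply, Finset.sum_sub_distrib, Finset.sum_add_distrib, divRic,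
    covDeriv_colMatrix_apply (hg.differentiableAt_colMatrix_mixedRic hx _), hg.spd_Scal hx,
    hg.sum_Gamma_mul_mixedRic hx]
  ring

/-- On a soliton `∇ⱼVᵏ = R_jᵏ`, so the Ricci identity applied to the vector field dual to `V`
involves only first derivatives of the curvature. -/
theorem divRic_sub_spd_Scal (hg : IsPseudoMetricOn Ω g ginv) {V : Fin n → SFld n}
    (hV : ∀ k, ContDiffOn ℝ 2 (V k) Ω)
    (hsoliton : ∀ x ∈ Ω, ∀ i j, Ric g ginv i j x = cd1 g ginv i V j x) (hx : x ∈ Ω) (j : Fin n) :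
    divRic g ginv j x - spd j (Scal g ginv) x
      = ∑ k, Ric g ginv j k x * ∑ l, ginv k l x * V l x := by
  have hVm {y} (hy : y ∈ Ω) : ContDiffAt ℝ 2 (colMatrix V) y :=
    contDiffAt_colMatrix fun k => (hV k).contDiffAt (hg.isOpen.mem_nhds hy)
  let W := fun y => tensorMatrix ginv y * colMatrix V y
  have hW : ContDiffAt ℝ 2 W x :=
    ((hg.contDiffAt_tensorMatrix_inv hx).of_le (by norm_num)).mul (hVm hx)
  have hgrad {y} (hy : y ∈ Ω) (i) :
      covDeriv (christoffelMatrix g ginv) i W y = colMatrix (mixedRic g ginv i) y := by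
    have hVy := (hVm hy).differentiableAt two_ne_zero
    have hRic : colMatrix (Ric g ginv i) y = colMatrix (cd1 g ginv i V) y := by
      ext k _
      exact hsoliton y hy i k
    rw [covDeriv_mul_of_parallel
      ((hg.contDiffAt_tensorMatrix_inv hy).differentiableAt three_ne_zero) hVy
      (hg.covDeriv₂_tensorMatrix_inv hy i), colMatrix_mixedRic, hRic, colMatrix_cd1 hVy]
  have hgrad' (i) : covDeriv (christoffelMatrix g ginv) i W =ᶠ[𝓝 x] colMatrix (mixedRic g ginv i) :=
    eventually_of_mem (hg.isOpen.mem_nhds hx) fun _ hy => hgrad hy i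
  have hcomm (i) := ricci_identity (i := i) (j := j)
    (fun i => (hg.contDiffAt_christoffelMatrix hx i).differentiableAt two_ne_zero) hW
  simp only [covDeriv_congr (hgrad' _)] at hcomm
  rw [← hg.sum_covDeriv_mixedRic hx j j]
  simp only [hcomm, hg.sum_curvature_mul_apply hx]
  rfl

end IsPseudoMetricOn

end CCS

theorem soliton_identity_general {n : ℕ} {Ω : Set (Fin n → ℝ)} {g ginv : CCS.SMet n}
    (hg : CCS.IsPseudoMetricOn Ω g ginv) {V : Fin n → CCS.SFld n}
    (hV : ∀ j, ContDiffOn ℝ 2 (V j) Ω)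
    (hsoliton : ∀ x ∈ Ω, ∀ i j, CCS.Ric g ginv i j x = CCS.cd1 g ginv i V j x) :
    ∀ x ∈ Ω, ∀ j : Fin n,
      (1 / 2) * CCS.spd j (CCS.Scal g ginv) x
      + ∑ k, ∑ l, CCS.Ric g ginv j k x * ginv k l x * V l x = 0 := by
  intro x hx j
  have hbianchi := hg.contracted_bianchi hx j
  have hricci := hg.divRic_sub_spd_Scal hV hsoliton hx j
  simp only [Finset.mul_sum, ← mul_assoc] at hricci
  linear_combination (-1 / 2) * hbianchi - hricci

/-- equation (2.16) of Chow–Chu. If `(g, V)` satisfies the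
gradient Ricci soliton equation `∇ᵢVⱼ = ∇ⱼVᵢ`, `R_{ij} = ∇ᵢVⱼ` on `Ω`,
then `½ ∂ⱼR + R_{jk} g^{kl} V_l = 0` on `Ω`. -/
theorem soliton_identity (n : ℕ) (hn : 2 ≤ n) (Ωs : Set (Fin n → ℝ))
    (hΩ : IsOpen Ωs) (hconn : IsConnected Ωs)
    (g ginv : CCS.SMet n)
    (hsm : ∀ i j, ContDiffOn ℝ (⊤ : ℕ∞) (g i j) Ωs)
    (hsym : ∀ x ∈ Ωs, ∀ i j, g i j x = g j i x)
    (hpos : ∀ x ∈ Ωs, ∀ v : Fin n → ℝ, v ≠ 0 → 0 < ∑ i, ∑ j, g i j x * v i * v j)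
    (hinv : ∀ x ∈ Ωs, ∀ i j, ∑ k, g i k x * ginv k j x = (if i = j then (1:ℝ) else 0))
    (V : Fin n → CCS.SFld n) (hVsm : ∀ j, ContDiffOn ℝ (⊤ : ℕ∞) (V j) Ωs)
    (hclosed : ∀ x ∈ Ωs, ∀ i j, CCS.cd1 g ginv i V j x = CCS.cd1 g ginv j V i x)
    (hsoliton : ∀ x ∈ Ωs, ∀ i j, CCS.Ric g ginv i j x = CCS.cd1 g ginv i V j x) :
    ∀ x ∈ Ωs, ∀ j : Fin n,
      (1/2) * CCS.spd j (CCS.Scal g ginv) x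
      + ∑ k, ∑ l, CCS.Ric g ginv j k x * ginv k l x * V l x = 0 := by
  exact soliton_identity_general
    ⟨hΩ, fun i j => contDiffOn_infty.1 (hsm i j) 3, hsym, hinv⟩
    (fun j => contDiffOn_infty.1 (hVsm j) 2) hsoliton
end
end

section
/- Let g be a solution of the Ricci flow on Ω × [0,T), let V = (V_i(x,t)) be a smooth time-dependent 1-form satisfying at every time the gradient Ricci soliton equations ∇_i V_j = ∇_j V_i and R_{ij} = ∇_i V_j, together with ∂V_j/∂t = ΔV_j − R_{jl} g^{lm} V_m, and let U = (U_{ij}(x,t)) be a smooth time-dependent antisymmetric 2-tensor with ∇_k U_{ij} = 0 and ∂U_{ij}/∂t = ΔU_{ij} for all indices. Define the 1-form W by W_i = −U_{ij} g^{jk} V_k. Then for all 1 ≤ i,k ≤ n: (a) ∇_k W_i = −U_{ij} g^{jl} R_{kl}, and (b) ∂W_i/∂t = ΔW_i + ½ g^{pq} ∂_p R · U_{iq}, where Δ = g^{pq}∇_p∇_q is the rough Laplacian on tensors. -/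
/- Common local-coordinate framework for the Chow–Chu space-time
   interpretation of Hamilton's Harnack inequality for the Ricci flow. -/

noncomputable section
open scoped BigOperators
open Filter

namespace CC

/-- A time-dependent scalar field on `ℝⁿ × ℝ` (space variable first, then time). -/
abbrev Fld (n : ℕ) := (Fin n → ℝ) → ℝ → ℝ

/-- A time-dependent 2-tensor field (e.g. a metric) in local coordinates. -/
abbrev Met (n : ℕ) := Fin n → Fin n → Fld n

variable {n : ℕ}

/-- Spatial partial derivative `∂ᵢ` of a time-dependent scalar field. -/
def spd (i : Fin n) (u : Fld n) : Fld n :=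
  fun x t => fderiv ℝ (fun y => u y t) x (Pi.single i 1)

/-- Time partial derivative `∂/∂t` of a time-dependent scalar field. -/
def tpd (u : Fld n) : Fld n :=
  fun x t => deriv (fun s => u x s) t

/-- Christoffel symbols `Γ^k_{ij} = ½ g^{kl}(∂ᵢ g_{jl} + ∂ⱼ g_{il} − ∂ₗ g_{ij})`. -/
def Gamma (g ginv : Met n) (k i j : Fin n) : Fld n :=
  fun x t => (1/2) * ∑ l, ginv k l x t *
    (spd i (g j l) x t + spd j (g i l) x t - spd l (g i j) x t)

/-- Riemann curvature `R^l_{ijk} = ∂ᵢΓ^l_{jk} − ∂ⱼΓ^l_{ik} + Γ^m_{jk}Γ^l_{im} − Γ^m_{ik}Γ^l_{jm}`. -/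
def Riem (g ginv : Met n) (l i j k : Fin n) : Fld n :=
  fun x t => spd i (Gamma g ginv l j k) x t - spd j (Gamma g ginv l i k) x t
    + ∑ m, (Gamma g ginv m j k x t * Gamma g ginv l i m x t
          - Gamma g ginv m i k x t * Gamma g ginv l j m x t)

/-- Ricci curvature `R_{jk} = R^p_{pjk}`. -/
def Ric (g ginv : Met n) (j k : Fin n) : Fld n :=
  fun x t => ∑ p, Riem g ginv p p j k x t

/-- Scalar curvature `R = g^{jk} R_{jk}`. -/
def Scal (g ginv : Met n) : Fld n :=
  fun x t => ∑ j, ∑ k, ginv j k x t * Ric g ginv j k x t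

/-- Ricci curvature with raised index, `R^k_i = g^{km} R_{im}`. -/
def RicUp (g ginv : Met n) (k i : Fin n) : Fld n :=
  fun x t => ∑ m, ginv k m x t * Ric g ginv i m x t

/-- Fully lowered Riemann tensor `R_{ijkl} = g_{lm} R^m_{ijk}`. -/
def RiemLow (g ginv : Met n) (i j k l : Fin n) : Fld n :=
  fun x t => ∑ m, g l m x t * Riem g ginv m i j k x t

/-- Covariant derivative of a 1-form: `∇ᵢω_j = ∂ᵢω_j − Γ^p_{ij} ω_p`. -/
def cd1 (g ginv : Met n) (i : Fin n) (ω : Fin n → Fld n) (j : Fin n) : Fld n :=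
  fun x t => spd i (ω j) x t - ∑ p, Gamma g ginv p i j x t * ω p x t

/-- Covariant derivative of a (0,2)-tensor. -/
def cd2 (g ginv : Met n) (i : Fin n) (A : Fin n → Fin n → Fld n) (j k : Fin n) : Fld n :=
  fun x t => spd i (A j k) x t - ∑ p, Gamma g ginv p i j x t * A p k x t
    - ∑ p, Gamma g ginv p i k x t * A j p x t

/-- Covariant derivative of a (1,1)-tensor `T^l_j`:
`∇_a T^l_j = ∂_a T^l_j + Γ^l_{ap} T^p_j − Γ^p_{aj} T^l_p`. -/
def cd11 (g ginv : Met n) (a : Fin n) (T : Fin n → Fin n → Fld n) (l j : Fin n) : Fld n :=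
  fun x t => spd a (T l j) x t + ∑ p, Gamma g ginv l a p x t * T p j x t
    - ∑ p, Gamma g ginv p a j x t * T l p x t

/-- Covariant derivative of a vector field: `∇ᵢV^l = ∂ᵢV^l + Γ^l_{ip} V^p`. -/
def cdVec (g ginv : Met n) (i : Fin n) (V : Fin n → Fld n) (l : Fin n) : Fld n :=
  fun x t => spd i (V l) x t + ∑ p, Gamma g ginv l i p x t * V p x t

/-- Hessian of a scalar: `∇ᵢ∇ⱼu = ∂ᵢ∂ⱼu − Γ^p_{ij}∂_p u`. -/
def hess (g ginv : Met n) (u : Fld n) (i j : Fin n) : Fld n :=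
  fun x t => spd i (spd j u) x t - ∑ p, Gamma g ginv p i j x t * spd p u x t

/-- Gradient (raised differential) of the scalar curvature: `∇^l R = g^{lm}∂_m R`. -/
def gradScal (g ginv : Met n) (l : Fin n) : Fld n :=
  fun x t => ∑ m, ginv l m x t * spd m (Scal g ginv) x t

/-- Rough Laplacian `Δ = g^{pq}∇_p∇_q` on 1-forms. -/
def lap1 (g ginv : Met n) (V : Fin n → Fld n) (j : Fin n) : Fld n :=
  fun x t => ∑ p, ∑ q, ginv p q x t *
    (spd p (cd1 g ginv q V j) x t
     - ∑ m, Gamma g ginv m p q x t * cd1 g ginv m V j x t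
     - ∑ m, Gamma g ginv m p j x t * cd1 g ginv q V m x t)

/-- Rough Laplacian `Δ = g^{pq}∇_p∇_q` on (0,2)-tensors. -/
def lap02 (g ginv : Met n) (A : Fin n → Fin n → Fld n) (i j : Fin n) : Fld n :=
  fun x t => ∑ p, ∑ q, ginv p q x t *
    (spd p (cd2 g ginv q A i j) x t
     - ∑ m, Gamma g ginv m p q x t * cd2 g ginv m A i j x t
     - ∑ m, Gamma g ginv m p i x t * cd2 g ginv q A m j x t
     - ∑ m, Gamma g ginv m p j x t * cd2 g ginv q A i m x t)

/-- Rough Laplacian `Δ = g^{pq}∇_p∇_q` on (1,1)-tensors. -/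
def lap11 (g ginv : Met n) (T : Fin n → Fin n → Fld n) (l i : Fin n) : Fld n :=
  fun x t => ∑ p, ∑ q, ginv p q x t *
    (spd p (cd11 g ginv q T l i) x t
     + ∑ m, Gamma g ginv l p m x t * cd11 g ginv q T m i x t
     - ∑ m, Gamma g ginv m p q x t * cd11 g ginv m T l i x t
     - ∑ m, Gamma g ginv m p i x t * cd11 g ginv q T l m x t)

/-- Laplacian of the scalar curvature `ΔR = g^{ij}(∂ᵢ∂ⱼR − Γ^p_{ij}∂_pR)`. -/
def lapScal (g ginv : Met n) : Fld n :=
  fun x t => ∑ i, ∑ j, ginv i j x t * hess g ginv (Scal g ginv) i j x t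

/-- Squared norm of the Ricci tensor `|Ric|² = g^{ik}g^{jl}R_{ij}R_{kl}`. -/
def normRicSq (g ginv : Met n) : Fld n :=
  fun x t => ∑ i, ∑ j, ∑ k, ∑ l,
    ginv i k x t * ginv j l x t * Ric g ginv i j x t * Ric g ginv k l x t

/-- Hamilton's tensor `P_{ijk} = ∇ᵢR_{jk} − ∇ⱼR_{ik}`. -/
def Pt (g ginv : Met n) (i j k : Fin n) : Fld n :=
  fun x t => cd2 g ginv i (Ric g ginv) j k x t - cd2 g ginv j (Ric g ginv) i k x t

/-- Hamilton's tensor `M_{ij} = ΔR_{ij} − ½∇ᵢ∇ⱼR + 2R_{kijl}R_{kl} − R_{ik}R_{kj}`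
(repeated lower indices contracted with `g^{··}`). -/
def Mt (g ginv : Met n) (i j : Fin n) : Fld n :=
  fun x t => lap02 g ginv (Ric g ginv) i j x t
    - (1/2) * hess g ginv (Scal g ginv) i j x t
    + 2 * ∑ k, ∑ l, ∑ a, ∑ b, ginv k a x t * ginv l b x t *
        RiemLow g ginv k i j l x t * Ric g ginv a b x t
    - ∑ k, ∑ a, ginv k a x t * Ric g ginv i k x t * Ric g ginv a j x t

/-- Hamilton's Harnack quadratic
`Z(U,W) = M_{ij}W_iW_j − 2P_{ijk}U_{ij}W_k + R_{ijkl}U_{ij}U_{lk}`,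
repeated lower indices being contracted with `g^{··}`. -/
def Zharnack (g ginv : Met n) (U : Fin n → Fin n → ℝ) (W : Fin n → ℝ) : Fld n :=
  fun x t =>
    (∑ i, ∑ j, ∑ p, ∑ q, ginv i p x t * ginv j q x t * Mt g ginv i j x t * W p * W q)
    - 2 * (∑ i, ∑ j, ∑ k, ∑ p, ∑ q, ∑ r,
        ginv i p x t * ginv j q x t * ginv k r x t * Pt g ginv i j k x t * U p q * W r)
    + (∑ i, ∑ j, ∑ k, ∑ l, ∑ p, ∑ q, ∑ r, ∑ s,
        ginv i p x t * ginv j q x t * ginv k r x t * ginv l s x t *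
          RiemLow g ginv i j k l x t * U p q * U s r)

/-- `g` (with pointwise inverse `ginv`) is a smooth solution of the Ricci flow
`∂g_{ij}/∂t = −2R_{ij}` on `Ω × [0,T)`. -/
def RicciFlow (Ωs : Set (Fin n → ℝ)) (T : ℝ) (g ginv : Met n) : Prop :=
  IsOpen Ωs ∧ IsConnected Ωs ∧ 0 < T ∧
  (∀ i j, ContDiffOn ℝ (⊤ : ℕ∞) (fun p : (Fin n → ℝ) × ℝ => g i j p.1 p.2)
      (Ωs ×ˢ Set.Ico 0 T)) ∧
  (∀ x ∈ Ωs, ∀ t ∈ Set.Ico (0:ℝ) T,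
    (∀ i j, g i j x t = g j i x t) ∧
    (∀ v : Fin n → ℝ, v ≠ 0 → 0 < ∑ i, ∑ j, g i j x t * v i * v j) ∧
    (∀ i j, ∑ k, g i k x t * ginv k j x t = (if i = j then (1:ℝ) else 0)) ∧
    (∀ i j, tpd (g i j) x t = -2 * Ric g ginv i j x t))

/-! ### Space-time objects -/

/-- A space-time connection on `M̃ = Ω × [0,T)`: the index `0` is time,
the index `i.succ` is the spatial direction `i`. -/
abbrev Con (n : ℕ) := Fin (n+1) → Fin (n+1) → Fin (n+1) → Fld n

/-- Space-time partial derivative: `∂₀ = ∂/∂t` and `∂_{i.succ} = ∂ᵢ`. -/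
def spdT (i : Fin (n+1)) (u : Fld n) : Fld n :=
  Fin.cases (tpd u) (fun j => spd j u) i

/-- Curvature of a space-time connection:
`R̃^l_{ijk} = ∂ᵢΓ̃^l_{jk} − ∂ⱼΓ̃^l_{ik} + Σ_m (Γ̃^m_{jk}Γ̃^l_{im} − Γ̃^m_{ik}Γ̃^l_{jm})`. -/
def RiemT (Γ : Con n) (l i j k : Fin (n+1)) : Fld n :=
  fun x t => spdT i (Γ l j k) x t - spdT j (Γ l i k) x t
    + ∑ m : Fin (n+1), (Γ m j k x t * Γ l i m x t - Γ m i k x t * Γ l j m x t)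

/-- Ricci tensor of a space-time connection: `R̃_{jk} = Σ_p R̃^p_{pjk}`. -/
def RicT (Γ : Con n) (j k : Fin (n+1)) : Fld n :=
  fun x t => ∑ p : Fin (n+1), RiemT Γ p p j k x t

/-- Space-time covariant derivative of a (0,2)-tensor with respect to a connection. -/
def cdT2 (Γ : Con n) (a : Fin (n+1)) (A : Fin (n+1) → Fin (n+1) → Fld n)
    (b c : Fin (n+1)) : Fld n :=
  fun x t => spdT a (A b c) x t - ∑ p : Fin (n+1), Γ p a b x t * A p c x t
    - ∑ p : Fin (n+1), Γ p a c x t * A b p x t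

/-- Space-time covariant derivative of a (1,1)-tensor with respect to a connection. -/
def cdT11 (Γ : Con n) (a : Fin (n+1)) (T : Fin (n+1) → Fin (n+1) → Fld n)
    (l j : Fin (n+1)) : Fld n :=
  fun x t => spdT a (T l j) x t + ∑ p : Fin (n+1), Γ l a p x t * T p j x t
    - ∑ p : Fin (n+1), Γ p a j x t * T l p x t

/-- Time shift of a field by `τ`. -/
def shift (τ : ℝ) (u : Fld n) : Fld n := fun x t => u x (t + τ)

/-- The degenerate inverse metric on space-time (no time shift):
`g̃^{ij} = g^{ij}` for spatial `i,j` and `g̃^{ij} = 0` if `i = 0` or `j = 0`. -/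
def gdegM (ginv : Met n) (i j : Fin (n+1)) : Fld n :=
  Fin.cases (fun _ _ => (0:ℝ))
    (fun i' => Fin.cases (fun _ _ => (0:ℝ)) (fun j' => ginv i' j') j) i

/-- The degenerate inverse metric `g̃_τ` on `M̃_τ`, shifted in time by `τ`. -/
def gdeg (ginv : Met n) (τ : ℝ) (i j : Fin (n+1)) : Fld n :=
  shift τ (gdegM ginv i j)

/-- The Chow–Chu connection `Γ̃_τ` on space-time, defined by (A1)–(A4)
(with time shift `τ`). -/
def GammaA (g ginv : Met n) (τ : ℝ) : Con n :=
  fun k i j =>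
    Fin.cases (fun _ _ => (0:ℝ))
      (fun k' =>
        Fin.cases
          (Fin.cases
            (shift τ (fun x t => -(1/2) * ∑ m, ginv k' m x t * spd m (Scal g ginv) x t))
            (fun j' => shift τ (fun x t => -(RicUp g ginv k' j' x t))) j)
          (fun i' =>
            Fin.cases (shift τ (fun x t => -(RicUp g ginv k' i' x t)))
              (fun j' => shift τ (Gamma g ginv k' i' j')) j) i) k

/-! ### The modified flow -/

/-- `∇ᵢ∇^k f = g^{km} ∇ᵢ∇ₘ f`. -/
def hessUp (g ginv : Met n) (f : Fld n) (i k : Fin n) : Fld n :=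
  fun x t => ∑ m, ginv k m x t * hess g ginv f i m x t

/-- `∇^p f = g^{pq} ∂_q f`. -/
def gradf (ginv : Met n) (f : Fld n) (p : Fin n) : Fld n :=
  fun x t => ∑ q, ginv p q x t * spd q f x t

/-- The potential `−½R + ∂f/∂t − ½|∇f|²`. -/
def Fpot (g ginv : Met n) (f : Fld n) : Fld n :=
  fun x t => -(1/2) * Scal g ginv x t + tpd f x t
    - (1/2) * ∑ p, ∑ q, ginv p q x t * spd p f x t * spd q f x t

/-- The space-time connection `Γ̃` of the modified flow, defined by (D1)–(D4). -/
def GammaD (g ginv : Met n) (f : Fld n) : Con n :=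
  fun k i j =>
    Fin.cases (fun _ _ => (0:ℝ))
      (fun k' =>
        Fin.cases
          (Fin.cases
            (fun x t => ∑ l, ginv k' l x t * spd l (Fpot g ginv f) x t)
            (fun j' => fun x t => -(RicUp g ginv k' j' x t) + hessUp g ginv f j' k' x t) j)
          (fun i' =>
            Fin.cases
              (fun x t => -(RicUp g ginv k' i' x t) + hessUp g ginv f i' k' x t)
              (fun j' => Gamma g ginv k' i' j') j) i) k

/-- Space-time Hessian `∇̃_a∇̃_b f = ∂_a∂_b f − Σ_p Γ̃^p_{ab} ∂_p f` (with `∂₀ = ∂/∂t`). -/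
def hessT (Γ : Con n) (f : Fld n) (a b : Fin (n+1)) : Fld n :=
  fun x t => spdT a (spdT b f) x t - ∑ p : Fin (n+1), Γ p a b x t * spdT p f x t

/-- Space-time Ricci tensor with first index raised by the degenerate metric:
`R̃^k_i = Σ_{p=1}^n g^{kp} R̃_{pi}` for spatial `k`, and `R̃^0_i = 0`. -/
def ricTup (ginv : Met n) (Γ : Con n) (k i : Fin (n+1)) : Fld n :=
  Fin.cases (fun _ _ => (0:ℝ))
    (fun k' => fun x t => ∑ p, ginv k' p x t * RicT Γ p.succ i x t) k

/-- `g` is a smooth solution of the modified Ricci flow with potential `f`: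
`∂g_{ij}/∂t = −2R_{ij} + 2∇ᵢ∇ⱼf` on `Ω × [0,T)`. -/
def ModifiedRicciFlow (Ωs : Set (Fin n → ℝ)) (T : ℝ) (g ginv : Met n) (f : Fld n) : Prop :=
  IsOpen Ωs ∧ IsConnected Ωs ∧ 0 < T ∧
  (∀ i j, ContDiffOn ℝ (⊤ : ℕ∞) (fun p : (Fin n → ℝ) × ℝ => g i j p.1 p.2)
      (Ωs ×ˢ Set.Ico 0 T)) ∧
  ContDiffOn ℝ (⊤ : ℕ∞) (fun p : (Fin n → ℝ) × ℝ => f p.1 p.2) (Ωs ×ˢ Set.Ico 0 T) ∧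
  (∀ x ∈ Ωs, ∀ t ∈ Set.Ico (0:ℝ) T,
    (∀ i j, g i j x t = g j i x t) ∧
    (∀ v : Fin n → ℝ, v ≠ 0 → 0 < ∑ i, ∑ j, g i j x t * v i * v j) ∧
    (∀ i j, ∑ k, g i k x t * ginv k j x t = (if i = j then (1:ℝ) else 0)) ∧
    (∀ i j, tpd (g i j) x t = -2 * Ric g ginv i j x t + 2 * hess g ginv f i j x t))

/-! ### The approximating metrics `g̃_{ε,δ}` -/

/-- The space-time metric `g̃_{ε,δ}`: spatial part `g`, `g̃_{00} = R + ε/(2(t+δ))`,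
mixed components zero. -/
def gE (g ginv : Met n) (ε δ : ℝ) (i j : Fin (n+1)) : Fld n :=
  Fin.cases
    (Fin.cases (fun x t => Scal g ginv x t + ε / (2 * (t + δ)))
      (fun _ => fun _ _ => (0:ℝ)) j)
    (fun i' => Fin.cases (fun _ _ => (0:ℝ)) (fun j' => g i' j') j) i

/-- The (block-diagonal) inverse of `g̃_{ε,δ}`. -/
def gEinv (g ginv : Met n) (ε δ : ℝ) (i j : Fin (n+1)) : Fld n :=
  Fin.cases
    (Fin.cases (fun x t => (Scal g ginv x t + ε / (2 * (t + δ)))⁻¹)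
      (fun _ => fun _ _ => (0:ℝ)) j)
    (fun i' => Fin.cases (fun _ _ => (0:ℝ)) (fun j' => ginv i' j') j) i

/-- The Levi-Civita Christoffel symbols of `g̃_{ε,δ}`:
`Γ̃^k_{ij} = ½ g̃^{kl}(∂ᵢg̃_{jl} + ∂ⱼg̃_{il} − ∂ₗg̃_{ij})`, indices in `0,…,n`. -/
def GammaE (g ginv : Met n) (ε δ : ℝ) : Con n :=
  fun k i j => fun x t => (1/2) * ∑ l : Fin (n+1), gEinv g ginv ε δ k l x t *
    (spdT i (gE g ginv ε δ j l) x t + spdT j (gE g ginv ε δ i l) x t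
      - spdT l (gE g ginv ε δ i j) x t)

end CC

/-
For the Christoffel matrices `(Aᵢ)^l_k = Γ^l_{ik}` and their curvature
`F_{ij} = ∂ᵢA_j - ∂_jAᵢ + [Aᵢ, A_j]` the Bianchi identity `D_a F_{ij} + D_i F_{ja} + D_j F_{ai} = 0`
is formal, and its contraction gives `∂R = 2 div Ric`. On a soliton `Ric = ∇V`, so the Ricci
identity turns `∇_a R_{jk} - ∇_j R_{ak}` into a curvature term; contracting it and comparing with
`∂R = 2 div Ric` shows `ΔV = div Ric = -Ric(V)`.

As `U` and `g` are parallel, `∇` and `Δ` commute with the contraction `V ↦ W`. This is (a), and it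
gives `ΔW_i = -U_{ij} g^{jk} (div Ric)_k = -½ g^{pq} ∂_p R U_{iq}`. For (b) it remains to see that
`∂W/∂t = 0`: `U` is constant in time since `∂U/∂t = ΔU = 0`, while
`∂(g⁻¹V)/∂t = 2 g⁻¹ Ric g⁻¹ V + g⁻¹ (ΔV - Ric(V)) = 0`.
-/

namespace CC

open Matrix Set Topology
open scoped Matrix.Norms.Operator

section CoordDeriv

variable {ι F G E : Type*} [DecidableEq ι]
  [NormedAddCommGroup F] [NormedSpace ℝ F] [NormedAddCommGroup G] [NormedSpace ℝ G]
  [NormedAddCommGroup E] [NormedSpace ℝ E]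
  {Ω : Set (ι → ℝ)} {f f' : (ι → ℝ) → F} {x : ι → ℝ}

/-- The partial derivative `∂ᵢ f` of a function on `ℝ^ι` with values in a normed space. -/
def coordDeriv (i : ι) (f : (ι → ℝ) → F) (x : ι → ℝ) : F :=
  fderiv ℝ f x (Pi.single i 1)

theorem coordDeriv_congr (hΩ : IsOpen Ω) (h : EqOn f f' Ω) (i : ι) (hx : x ∈ Ω) :
    coordDeriv i f x = coordDeriv i f' x := by
  rw [coordDeriv, (h.eventuallyEq_of_mem (hΩ.mem_nhds hx)).fderiv_eq, coordDeriv]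

variable [Fintype ι]

theorem coordDeriv_add (i : ι) (hf : DifferentiableAt ℝ f x) (hf' : DifferentiableAt ℝ f' x) :
    coordDeriv i (fun y => f y + f' y) x = coordDeriv i f x + coordDeriv i f' x := by
  simp only [coordDeriv, fderiv_fun_add hf hf', _root_.add_apply]

theorem coordDeriv_sub (i : ι) (hf : DifferentiableAt ℝ f x) (hf' : DifferentiableAt ℝ f' x) :
    coordDeriv i (fun y => f y - f' y) x = coordDeriv i f x - coordDeriv i f' x := by
  simp only [coordDeriv, fderiv_fun_sub hf hf', _root_.sub_apply]

theorem coordDeriv_neg (i : ι) (f : (ι → ℝ) → F) (x : ι → ℝ) :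
    coordDeriv i (fun y => -f y) x = -coordDeriv i f x := by
  simp only [coordDeriv, fderiv_fun_neg, _root_.neg_apply]

theorem coordDeriv_sum {κ : Type*} (s : Finset κ) {φ : κ → (ι → ℝ) → F} (i : ι)
    (hφ : ∀ k ∈ s, DifferentiableAt ℝ (φ k) x) :
    coordDeriv i (fun y => ∑ k ∈ s, φ k y) x = ∑ k ∈ s, coordDeriv i (φ k) x := by
  simp only [coordDeriv, fderiv_fun_sum hφ, _root_.sum_apply]

theorem coordDeriv_bilinear (L : F →L[ℝ] G →L[ℝ] E) (i : ι) {g : (ι → ℝ) → G}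
    (hf : DifferentiableAt ℝ f x) (hg : DifferentiableAt ℝ g x) :
    coordDeriv i (fun y => L (f y) (g y)) x
      = L (coordDeriv i f x) (g x) + L (f x) (coordDeriv i g x) := by
  simp [coordDeriv, L.fderiv_of_bilinear hf hg, add_comm]

theorem coordDeriv_mul {𝔸 : Type*} [NormedRing 𝔸] [NormedAlgebra ℝ 𝔸] (i : ι)
    {a b : (ι → ℝ) → 𝔸} (ha : DifferentiableAt ℝ a x) (hb : DifferentiableAt ℝ b x) :
    coordDeriv i (fun y => a y * b y) x = coordDeriv i a x * b x + a x * coordDeriv i b x :=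
  coordDeriv_bilinear (ContinuousLinearMap.mul ℝ 𝔸) i ha hb

theorem coordDeriv_linearMap [FiniteDimensional ℝ F] (L : F →ₗ[ℝ] G) (i : ι)
    (hf : DifferentiableAt ℝ f x) :
    coordDeriv i (fun y => L (f y)) x = L (coordDeriv i f x) := by
  have h := (L.toContinuousLinearMap.hasFDerivAt (x := f x)).comp x hf.hasFDerivAt
  exact congr($(h.fderiv) (Pi.single i 1))

theorem contDiffOn_coordDeriv {k m : WithTop ℕ∞} (hΩ : IsOpen Ω) (hf : ContDiffOn ℝ k f Ω)
    (hmk : m + 1 ≤ k) (i : ι) : ContDiffOn ℝ m (coordDeriv i f) Ω :=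
  (hf.fderiv_of_isOpen hΩ hmk).clm_apply contDiffOn_const

theorem differentiableAt_coordDeriv (hf : ContDiffAt ℝ 2 f x) (i : ι) :
    DifferentiableAt ℝ (coordDeriv i f) x :=
  ((hf.fderiv_right (m := 1) (by norm_num)).clm_apply contDiffAt_const).differentiableAt
    one_ne_zero

theorem coordDeriv_comm (hf : ContDiffAt ℝ 2 f x) (i j : ι) :
    coordDeriv i (coordDeriv j f) x = coordDeriv j (coordDeriv i f) x := by
  have hd : DifferentiableAt ℝ (fderiv ℝ f) x :=
    (hf.fderiv_right (m := 1) (by norm_num)).differentiableAt one_ne_zero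
  have second (a b : ι) : coordDeriv a (coordDeriv b f) x
      = fderiv ℝ (fderiv ℝ f) x (Pi.single a 1) (Pi.single b 1) := by
    have h : HasFDerivAt (coordDeriv b f) _ x :=
      hd.hasFDerivAt.clm_apply (hasFDerivAt_const (Pi.single b 1 : ι → ℝ) x)
    simp [coordDeriv, h.fderiv]
  rw [second, second]
  exact (hf.isSymmSndFDerivAt (by simp)).eq _ _

end CoordDeriv

section Gauge

variable {ι 𝔸 : Type*} [DecidableEq ι] [NormedRing 𝔸] [NormedAlgebra ℝ 𝔸]
  {Ω : Set (ι → ℝ)} {A : ι → (ι → ℝ) → 𝔸} {x : ι → ℝ}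

/-- The curvature `F_{ij} = ∂ᵢA_j − ∂_jAᵢ + [Aᵢ, A_j]` of a connection form `A` with values in a
normed algebra. For the Christoffel matrices `(Aᵢ)^l_k = Γ^l_{ik}` its entries are the Riemann
curvature, `(F_{ij})^l_k = R^l_{ijk}`. -/
def gaugeCurvature (A : ι → (ι → ℝ) → 𝔸) (i j : ι) (x : ι → ℝ) : 𝔸 :=
  coordDeriv i (A j) x - coordDeriv j (A i) x + (A i x * A j x - A j x * A i x)

/-- The covariant derivative `∂_a f + [A_a, f]` of an endomorphism-valued function. -/
def gaugeDeriv (A : ι → (ι → ℝ) → 𝔸) (a : ι) (f : (ι → ℝ) → 𝔸) (x : ι → ℝ) : 𝔸 :=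
  coordDeriv a f x + (A a x * f x - f x * A a x)

theorem gaugeCurvature_swap (A : ι → (ι → ℝ) → 𝔸) (i j : ι) (x : ι → ℝ) :
    gaugeCurvature A j i x = -gaugeCurvature A i j x := by
  unfold gaugeCurvature
  abel

variable [Fintype ι]

theorem gaugeDeriv_neg (A : ι → (ι → ℝ) → 𝔸) (a : ι) (f : (ι → ℝ) → 𝔸) (x : ι → ℝ) :
    gaugeDeriv A a (fun y => -f y) x = -gaugeDeriv A a f x := by
  unfold gaugeDeriv
  rw [coordDeriv_neg]
  noncomm_ring

theorem contDiffOn_gaugeCurvature (hΩ : IsOpen Ω) (hA : ∀ i, ContDiffOn ℝ 2 (A i) Ω) (i j : ι) :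
    ContDiffOn ℝ 1 (gaugeCurvature A i j) Ω := by
  have hA₁ (i : ι) : ContDiffOn ℝ 1 (A i) Ω := (hA i).of_le one_le_two
  have hD (i j : ι) : ContDiffOn ℝ 1 (coordDeriv i (A j)) Ω :=
    contDiffOn_coordDeriv hΩ (hA j) (by norm_num) i
  exact ((hD i j).sub (hD j i)).add (((hA₁ i).mul (hA₁ j)).sub ((hA₁ j).mul (hA₁ i)))

theorem coordDeriv_gaugeCurvature (hA : ∀ i, ContDiffAt ℝ 2 (A i) x) (a i j : ι) :
    coordDeriv a (gaugeCurvature A i j) x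
      = coordDeriv a (coordDeriv i (A j)) x - coordDeriv a (coordDeriv j (A i)) x
        + ((coordDeriv a (A i) x * A j x + A i x * coordDeriv a (A j) x)
          - (coordDeriv a (A j) x * A i x + A j x * coordDeriv a (A i) x)) := by
  have d (i : ι) : DifferentiableAt ℝ (A i) x := (hA i).differentiableAt two_ne_zero
  have dd (i j : ι) := differentiableAt_coordDeriv (hA j) i
  unfold gaugeCurvature
  rw [coordDeriv_add a ((dd i j).fun_sub (dd j i))
      (((d i).fun_mul (d j)).fun_sub ((d j).fun_mul (d i))),
    coordDeriv_sub a (dd i j) (dd j i),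
    coordDeriv_sub a ((d i).fun_mul (d j)) ((d j).fun_mul (d i)),
    coordDeriv_mul a (d i) (d j), coordDeriv_mul a (d j) (d i)]

theorem gaugeCurvature_bianchi (hA : ∀ i, ContDiffAt ℝ 2 (A i) x) (a i j : ι) :
    gaugeDeriv A a (gaugeCurvature A i j) x + gaugeDeriv A i (gaugeCurvature A j a) x
      + gaugeDeriv A j (gaugeCurvature A a i) x = 0 := by
  unfold gaugeDeriv
  rw [coordDeriv_gaugeCurvature hA, coordDeriv_gaugeCurvature hA, coordDeriv_gaugeCurvature hA,
    coordDeriv_comm (hA j) a i, coordDeriv_comm (hA i) j a, coordDeriv_comm (hA a) i j]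
  unfold gaugeCurvature
  noncomm_ring

end Gauge

section Tensor

variable {ι : Type*} [Fintype ι]

theorem contDiffOn_matrix {E : Type*} [NormedAddCommGroup E] [NormedSpace ℝ E] {s : Set E}
    {k : WithTop ℕ∞} {B : E → Matrix ι ι ℝ} (hB : ∀ i j, ContDiffOn ℝ k (fun y => B y i j) s) :
    ContDiffOn ℝ k B s :=
  (ofLinearEquiv ℝ : (ι → ι → ℝ) ≃ₗ[ℝ] _).toLinearMap.toContinuousLinearMap.contDiff.comp_contDiffOn
    (contDiffOn_pi.mpr fun i => contDiffOn_pi.mpr (hB i))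

theorem contDiffOn_matrix_apply {E : Type*} [NormedAddCommGroup E] [NormedSpace ℝ E] {s : Set E}
    {k : WithTop ℕ∞} {B : E → Matrix ι ι ℝ} (hB : ContDiffOn ℝ k B s) (i j : ι) :
    ContDiffOn ℝ k (fun y => B y i j) s :=
  (entryLinearMap ℝ ℝ i j).toContinuousLinearMap.contDiff.comp_contDiffOn hB

theorem contDiffOn_mulVec {E : Type*} [NormedAddCommGroup E] [NormedSpace ℝ E] {s : Set E}
    {k : WithTop ℕ∞} {B : E → Matrix ι ι ℝ} {X : E → ι → ℝ} (hB : ContDiffOn ℝ k B s)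
    (hX : ContDiffOn ℝ k X s) : ContDiffOn ℝ k (fun y => B y *ᵥ X y) s :=
  contDiffOn_pi.mpr fun i => ContDiffOn.sum fun j _ =>
    (contDiffOn_matrix_apply hB i j).mul (contDiffOn_pi.mp hX j)

/-- The `1`-form `W_i = -U_{ij} g^{jk} X_k` obtained by contracting the `2`-tensor `U` with the
`1`-form `X`, where `H = (g^{jk})`. -/
def contraction (H U : Matrix ι ι ℝ) (X : ι → ℝ) : ι → ℝ :=
  -(U *ᵥ (H *ᵥ X))

theorem contraction_eq_vecMul {H : Matrix ι ι ℝ} (hH : H.IsSymm) (U : Matrix ι ι ℝ) (X : ι → ℝ) :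
    contraction H U X = X ᵥ* (-(H * Uᵀ)) := by
  rw [contraction, vecMul_neg, ← vecMul_vecMul, vecMul_transpose, ← mulVec_transpose, hH.eq]

variable {x : ι → ℝ} {B M : (ι → ℝ) → Matrix ι ι ℝ} {X : (ι → ℝ) → ι → ℝ}

theorem differentiableAt_matrix_apply (hB : DifferentiableAt ℝ B x) (i j : ι) :
    DifferentiableAt ℝ (fun y => B y i j) x :=
  (entryLinearMap ℝ ℝ i j).toContinuousLinearMap.differentiableAt.comp x hB

theorem differentiableAt_transpose (hB : DifferentiableAt ℝ B x) :
    DifferentiableAt ℝ (fun y => (B y)ᵀ) x :=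
  (transposeLinearEquiv ι ι ℝ ℝ).toLinearMap.toContinuousLinearMap.differentiableAt.comp x hB

theorem differentiableAt_vecMul (hX : DifferentiableAt ℝ X x) (hM : DifferentiableAt ℝ M x) :
    DifferentiableAt ℝ (fun y => X y ᵥ* M y) x :=
  differentiableAt_pi.mpr fun j => DifferentiableAt.fun_sum fun i _ =>
    (differentiableAt_pi.mp hX i).fun_mul (differentiableAt_matrix_apply hM i j)

variable [DecidableEq ι] {A : ι → (ι → ℝ) → Matrix ι ι ℝ}

theorem coordDeriv_transpose (i : ι) (hB : DifferentiableAt ℝ B x) :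
    coordDeriv i (fun y => (B y)ᵀ) x = (coordDeriv i B x)ᵀ :=
  coordDeriv_linearMap (transposeLinearEquiv ι ι ℝ ℝ).toLinearMap i hB

theorem coordDeriv_apply (i a b : ι) (hB : DifferentiableAt ℝ B x) :
    coordDeriv i (fun y => B y a b) x = coordDeriv i B x a b :=
  coordDeriv_linearMap (entryLinearMap ℝ ℝ a b) i hB

theorem coordDeriv_vecMul (i : ι) (hX : DifferentiableAt ℝ X x) (hM : DifferentiableAt ℝ M x) :
    coordDeriv i (fun y => X y ᵥ* M y) x = coordDeriv i X x ᵥ* M x + X x ᵥ* coordDeriv i M x :=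
  coordDeriv_bilinear
    (vecMulBilin ℝ ℝ : (ι → ℝ) →ₗ[ℝ] Matrix ι ι ℝ →ₗ[ℝ] ι → ℝ).toContinuousBilinearMap i hX hM

/-- The covariant derivative of a `1`-form, as the matrix `(∇_k X_j)` in the indices `k, j`. -/
def covDerivForm (A : ι → (ι → ℝ) → Matrix ι ι ℝ) (X : (ι → ℝ) → ι → ℝ) (x : ι → ℝ) :
    Matrix ι ι ℝ :=
  of fun k => coordDeriv k X x - X x ᵥ* A k x

/-- The covariant derivative `(∇_k B)_{ij}` of a `(0,2)`-tensor. Its counterpart for endomorphisms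
is `gaugeDeriv`. -/
def covDerivTensor (A : ι → (ι → ℝ) → Matrix ι ι ℝ) (k : ι) (B : (ι → ℝ) → Matrix ι ι ℝ)
    (x : ι → ℝ) : Matrix ι ι ℝ :=
  coordDeriv k B x - (A k x)ᵀ * B x - B x * A k x

/-- The divergence `g^{pq} ∇_p B_{qj}` of a `(0,2)`-tensor on its first index, where `H = (g^{pq})`;
the rough Laplacian of a `1`-form is the divergence of its covariant derivative. -/
def divergence (A : ι → (ι → ℝ) → Matrix ι ι ℝ) (H B : (ι → ℝ) → Matrix ι ι ℝ) (x : ι → ℝ) :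
    ι → ℝ :=
  ∑ p, H x p ᵥ* covDerivTensor A p B x

theorem differentiableAt_covDerivForm (hA : ∀ k, DifferentiableAt ℝ (A k) x)
    (hX : ContDiffAt ℝ 2 X x) : DifferentiableAt ℝ (covDerivForm A X) x :=
  (ofLinearEquiv ℝ : (ι → ι → ℝ) ≃ₗ[ℝ] _).toLinearMap.toContinuousLinearMap.differentiableAt.comp x
    (differentiableAt_pi.mpr fun k => (differentiableAt_coordDeriv hX k).fun_sub
      (differentiableAt_vecMul (hX.differentiableAt two_ne_zero) (hA k)))

theorem covDerivTensor_covDerivForm_row (hA : ∀ k, DifferentiableAt ℝ (A k) x)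
    (hX : ContDiffAt ℝ 2 X x) (i j : ι) :
    covDerivTensor A i (covDerivForm A X) x j
      = coordDeriv i (coordDeriv j X) x - (coordDeriv i X x ᵥ* A j x + X x ᵥ* coordDeriv i (A j) x)
        - (∑ m, A i x m j • covDerivForm A X x m)
        - (coordDeriv j X x - X x ᵥ* A j x) ᵥ* A i x := by
  have dX := hX.differentiableAt two_ne_zero
  have hD : coordDeriv i (covDerivForm A X) x j
      = coordDeriv i (coordDeriv j X) x
        - (coordDeriv i X x ᵥ* A j x + X x ᵥ* coordDeriv i (A j) x) := by
    rw [← coordDeriv_vecMul i dX (hA j),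
      ← coordDeriv_sub i (differentiableAt_coordDeriv hX j) (differentiableAt_vecMul dX (hA j))]
    exact (coordDeriv_linearMap ((LinearMap.proj j : (ι → ι → ℝ) →ₗ[ℝ] ι → ℝ) ∘ₗ
      (ofLinearEquiv ℝ).symm.toLinearMap) i (differentiableAt_covDerivForm hA hX)).symm
  ext k
  simp only [covDerivTensor, Matrix.sub_apply, hD, mul_apply, Pi.sub_apply, Finset.sum_apply,
    Pi.smul_apply, smul_eq_mul, transpose_apply]
  rfl

theorem covDerivTensor_transpose (k : ι) (hB : DifferentiableAt ℝ B x) :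
    covDerivTensor A k (fun y => (B y)ᵀ) x = (covDerivTensor A k B x)ᵀ := by
  simp only [covDerivTensor, coordDeriv_transpose k hB, transpose_sub, transpose_mul,
    transpose_transpose]
  abel

theorem covDerivForm_congr {Ω : Set (ι → ℝ)} {X' : (ι → ℝ) → ι → ℝ} (hΩ : IsOpen Ω)
    (hX : EqOn X X' Ω) (hx : x ∈ Ω) : covDerivForm A X x = covDerivForm A X' x := by
  simp only [covDerivForm, coordDeriv_congr hΩ hX _ hx, hX hx]

theorem covDerivTensor_congr {Ω : Set (ι → ℝ)} {B' : (ι → ℝ) → Matrix ι ι ℝ} (hΩ : IsOpen Ω)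
    (hB : EqOn B B' Ω) (k : ι) (hx : x ∈ Ω) :
    covDerivTensor A k B x = covDerivTensor A k B' x := by
  rw [covDerivTensor, coordDeriv_congr hΩ hB k hx, hB hx, covDerivTensor]

theorem divergence_congr {Ω : Set (ι → ℝ)} {H B' : (ι → ℝ) → Matrix ι ι ℝ} (hΩ : IsOpen Ω)
    (hB : EqOn B B' Ω) (hx : x ∈ Ω) : divergence A H B x = divergence A H B' x := by
  simp only [divergence, covDerivTensor_congr hΩ hB _ hx]

theorem covDerivTensor_mul (k : ι) (hB : DifferentiableAt ℝ B x) (hM : DifferentiableAt ℝ M x) :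
    covDerivTensor A k (fun y => B y * M y) x
      = covDerivTensor A k B x * M x + B x * gaugeDeriv A k M x := by
  rw [covDerivTensor, coordDeriv_mul k hB hM, covDerivTensor, gaugeDeriv]
  noncomm_ring

theorem covDerivForm_vecMul_of_parallel (hX : DifferentiableAt ℝ X x)
    (hM : DifferentiableAt ℝ M x) (hpar : ∀ k, gaugeDeriv A k M x = 0) :
    covDerivForm A (fun y => X y ᵥ* M y) x = covDerivForm A X x * M x := by
  ext k j
  have hMk : coordDeriv k M x = M x * A k x - A k x * M x := by
    rw [← sub_eq_zero, ← hpar k, gaugeDeriv]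
    abel
  have row : coordDeriv k (fun y => X y ᵥ* M y) x - (X x ᵥ* M x) ᵥ* A k x
      = (coordDeriv k X x - X x ᵥ* A k x) ᵥ* M x := by
    rw [coordDeriv_vecMul k hX hM, hMk, vecMul_sub, sub_vecMul, vecMul_vecMul, vecMul_vecMul]
    abel
  exact congrFun row j

theorem divergence_mul_of_parallel {H : (ι → ℝ) → Matrix ι ι ℝ} (hB : DifferentiableAt ℝ B x)
    (hM : DifferentiableAt ℝ M x) (hpar : ∀ k, gaugeDeriv A k M x = 0) :
    divergence A H (fun y => B y * M y) x = divergence A H B x ᵥ* M x := by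
  simp only [divergence, covDerivTensor_mul _ hB hM, hpar, mul_zero, add_zero, sum_vecMul,
    vecMul_vecMul]

end Tensor

section LeviCivita

variable {ι : Type*} [Fintype ι] [DecidableEq ι]
  {Ω : Set (ι → ℝ)} {A : ι → (ι → ℝ) → Matrix ι ι ℝ} {H B : (ι → ℝ) → Matrix ι ι ℝ}
  {x : ι → ℝ}

/-- `A` and `H` are the Christoffel matrices `(Aᵢ)^l_k = Γ^l_{ik}` and the inverse `(g^{jk})` of a
(pseudo-)Riemannian metric on `Ω`. The metric itself does not occur: compatibility
`∂ᵢg_{jk} = Γ^p_{ij} g_{pk} + Γ^p_{ik} g_{jp}` is expressed through its inverse. -/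
structure IsLeviCivitaOn (A : ι → (ι → ℝ) → Matrix ι ι ℝ) (H : (ι → ℝ) → Matrix ι ι ℝ)
    (Ω : Set (ι → ℝ)) : Prop where
  isOpen : IsOpen Ω
  contDiffOn_connection : ∀ i, ContDiffOn ℝ 2 (A i) Ω
  contDiffOn_inverse : ContDiffOn ℝ 2 H Ω
  isUnit : ∀ y ∈ Ω, IsUnit (H y)
  isSymm : ∀ y ∈ Ω, (H y).IsSymm
  torsionFree : ∀ y ∈ Ω, ∀ i j l, A i y l j = A j y l i
  compatible : ∀ y ∈ Ω, ∀ i, coordDeriv i H y = -(A i y * H y) - H y * (A i y)ᵀ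

/-- The Ricci curvature `R_{jk} = R^p_{pjk}` of the connection `A`. -/
def ricci (A : ι → (ι → ℝ) → Matrix ι ι ℝ) (x : ι → ℝ) : Matrix ι ι ℝ :=
  of fun j k => ∑ p, gaugeCurvature A p j x p k

/-- The scalar curvature `R = g^{jk} R_{kj}`. -/
def scalarCurvature (A : ι → (ι → ℝ) → Matrix ι ι ℝ) (H : (ι → ℝ) → Matrix ι ι ℝ)
    (x : ι → ℝ) : ℝ :=
  (H x * ricci A x).trace

/-- The covariant derivative `∇_a R^l_{ijk}` of the curvature, as a matrix in the indices `l, k`. -/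
def covDerivCurvature (A : ι → (ι → ℝ) → Matrix ι ι ℝ) (a i j : ι) (x : ι → ℝ) : Matrix ι ι ℝ :=
  gaugeDeriv A a (gaugeCurvature A i j) x - ∑ m, A a x m i • gaugeCurvature A m j x
    - ∑ m, A a x m j • gaugeCurvature A i m x

theorem covDerivCurvature_swap (A : ι → (ι → ℝ) → Matrix ι ι ℝ) (a i j : ι) (x : ι → ℝ) :
    covDerivCurvature A a j i x = -covDerivCurvature A a i j x := by
  have swap : gaugeCurvature A j i = fun y => -gaugeCurvature A i j y :=
    funext (gaugeCurvature_swap A i j)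
  have sum_swap (b c : ι) : ∑ m, A a x m b • gaugeCurvature A c m x
      = -∑ m, A a x m b • gaugeCurvature A m c x := by
    simp only [gaugeCurvature_swap A _ c, smul_neg, Finset.sum_neg_distrib]
  rw [covDerivCurvature, swap, gaugeDeriv_neg, sum_swap i j, covDerivCurvature, sum_swap j i]
  abel

namespace IsLeviCivitaOn

variable (h : IsLeviCivitaOn A H Ω)
include h

theorem contDiffOn_ricci : ContDiffOn ℝ 1 (ricci A) Ω :=
  contDiffOn_matrix fun _ _ => ContDiffOn.sum fun _ _ =>
    contDiffOn_matrix_apply (contDiffOn_gaugeCurvature h.isOpen h.contDiffOn_connection _ _) _ _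

variable (hx : x ∈ Ω)
include hx

theorem contDiffAt_connection (i : ι) : ContDiffAt ℝ 2 (A i) x :=
  (h.contDiffOn_connection i).contDiffAt (h.isOpen.mem_nhds hx)

theorem contDiffAt_inverse : ContDiffAt ℝ 2 H x :=
  h.contDiffOn_inverse.contDiffAt (h.isOpen.mem_nhds hx)

theorem differentiableAt_connection (i : ι) : DifferentiableAt ℝ (A i) x :=
  (h.contDiffAt_connection hx i).differentiableAt two_ne_zero

theorem differentiableAt_inverse : DifferentiableAt ℝ H x :=
  (h.contDiffAt_inverse hx).differentiableAt two_ne_zero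

theorem differentiableAt_curvature (i j : ι) : DifferentiableAt ℝ (gaugeCurvature A i j) x :=
  ((contDiffOn_gaugeCurvature h.isOpen h.contDiffOn_connection i j).contDiffAt
    (h.isOpen.mem_nhds hx)).differentiableAt one_ne_zero

theorem curvature_firstBianchi (i j k l : ι) :
    gaugeCurvature A i j x l k + gaugeCurvature A j k x l i + gaugeCurvature A k i x l j = 0 := by
  have torsion (a b c : ι) : coordDeriv a (A b) x l c = coordDeriv a (A c) x l b := by
    rw [← coordDeriv_apply a l c (h.differentiableAt_connection hx b),
      ← coordDeriv_apply a l b (h.differentiableAt_connection hx c)]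
    exact coordDeriv_congr h.isOpen (fun y hy => h.torsionFree y hy b c l) a hx
  have quadratic (a b c : ι) : (A a x * A b x) l c = (A a x * A c x) l b := by
    simp only [mul_apply, h.torsionFree x hx b c]
  simp only [gaugeCurvature, Matrix.add_apply, Matrix.sub_apply]
  rw [torsion i j k, torsion j k i, torsion k i j, quadratic i j k, quadratic j k i,
    quadratic k i j]
  ring

-- `F_{ij}` is `g`-skew: commute the second derivatives of the parallel tensor `H`.
theorem curvature_mul_inverse (i j : ι) :
    gaugeCurvature A i j x * H x = -(H x * (gaugeCurvature A i j x)ᵀ) := by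
  have second (i j : ι) : coordDeriv i (coordDeriv j H) x
      = -(coordDeriv i (A j) x * H x + A j x * (-(A i x * H x) - H x * (A i x)ᵀ))
        - ((-(A i x * H x) - H x * (A i x)ᵀ) * (A j x)ᵀ + H x * (coordDeriv i (A j) x)ᵀ) := by
    have dA := h.differentiableAt_connection hx j
    have dH := h.differentiableAt_inverse hx
    rw [coordDeriv_congr h.isOpen (fun y hy => h.compatible y hy j) i hx,
      coordDeriv_sub i (dA.fun_mul dH).fun_neg (dH.fun_mul (differentiableAt_transpose dA)),
      coordDeriv_neg,
      coordDeriv_mul i dA dH, coordDeriv_mul i dH (differentiableAt_transpose dA),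
      coordDeriv_transpose i dA,
      h.compatible x hx i]
  have comm := coordDeriv_comm (h.contDiffAt_inverse hx) i j
  rw [second, second, ← sub_eq_zero] at comm
  rw [eq_neg_iff_add_eq_zero, ← neg_eq_zero, ← comm]
  simp only [gaugeCurvature, transpose_add, transpose_sub, transpose_mul]
  noncomm_ring

theorem gaugeDeriv_curvature_mul_inverse (a i j : ι) :
    gaugeDeriv A a (gaugeCurvature A i j) x * H x
      = -(H x * (gaugeDeriv A a (gaugeCurvature A i j) x)ᵀ) := by
  have dF := h.differentiableAt_curvature hx i j
  have dH := h.differentiableAt_inverse hx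
  have skew := h.curvature_mul_inverse hx i j
  have deriv_skew := coordDeriv_congr h.isOpen (fun y hy => h.curvature_mul_inverse hy i j) a hx
  rw [coordDeriv_neg, coordDeriv_mul a dF dH, coordDeriv_mul a dH (differentiableAt_transpose dF),
    coordDeriv_transpose a dF,
    h.compatible x hx a, ← sub_eq_zero] at deriv_skew
  rw [← sub_eq_zero] at skew ⊢
  simp only [gaugeDeriv, transpose_add, transpose_sub, transpose_mul]
  set F := gaugeCurvature A i j x
  set P := coordDeriv a (gaugeCurvature A i j) x
  calc _ = (P * H x + F * (-(A a x * H x) - H x * (A a x)ᵀ)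
            - -((-(A a x * H x) - H x * (A a x)ᵀ) * Fᵀ + H x * Pᵀ))
          + A a x * (F * H x - -(H x * Fᵀ)) + (F * H x - -(H x * Fᵀ)) * (A a x)ᵀ := by
        noncomm_ring
    _ = 0 := by rw [deriv_skew, skew]; simp

theorem covDerivCurvature_mul_inverse (a i j : ι) :
    covDerivCurvature A a i j x * H x = -(H x * (covDerivCurvature A a i j x)ᵀ) := by
  simp only [covDerivCurvature, transpose_sub, transpose_sum, transpose_smul, sub_mul, mul_sub,
    Matrix.sum_mul, Matrix.mul_sum, smul_mul, Matrix.mul_smul,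
    h.gaugeDeriv_curvature_mul_inverse hx, h.curvature_mul_inverse hx, smul_neg,
    Finset.sum_neg_distrib]
  abel

theorem covDerivCurvature_secondBianchi (a i j : ι) :
    covDerivCurvature A a i j x + covDerivCurvature A i j a x + covDerivCurvature A j a i x
      = 0 := by
  have cancel (b c d : ι) : ∑ m, A b x m c • gaugeCurvature A d m x
      = -∑ m, A c x m b • gaugeCurvature A m d x := by
    simp only [h.torsionFree x hx b c, gaugeCurvature_swap A _ d, smul_neg,
      Finset.sum_neg_distrib]
  rw [← gaugeCurvature_bianchi (h.contDiffAt_connection hx) a i j]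
  unfold covDerivCurvature
  rw [cancel a j i, cancel i a j, cancel j i a]
  abel

theorem curvature_trace (i j : ι) : (gaugeCurvature A i j x).trace = 0 := by
  set F := gaugeCurvature A i j x
  have hdet : IsUnit (H x).det := (isUnit_iff_isUnit_det _).mp (h.isUnit x hx)
  have conj : F = -(H x * Fᵀ * (H x)⁻¹) := by
    rw [← Matrix.neg_mul, ← h.curvature_mul_inverse hx i j, mul_nonsing_inv_cancel_right _ _ hdet]
  have trace_neg : F.trace = -F.trace := by
    conv_lhs => rw [conj, trace_neg, trace_mul_comm, nonsing_inv_mul_cancel_left _ _ hdet,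
      trace_transpose]
  linarith

theorem ricci_isSymm : (ricci A x).IsSymm := by
  refine IsSymm.ext fun k j => sub_eq_zero.mp ?_
  calc ricci A x j k - ricci A x k j
      = -(gaugeCurvature A j k x).trace := by
        simp only [ricci, of_apply, trace, diag_apply, ← Finset.sum_sub_distrib,
          ← Finset.sum_neg_distrib]
        refine Finset.sum_congr rfl fun p _ => ?_
        have := h.curvature_firstBianchi hx p j k p
        rw [gaugeCurvature_swap A p k, Matrix.neg_apply] at this
        linarith
    _ = 0 := by rw [h.curvature_trace hx, neg_zero]

theorem differentiableAt_ricci : DifferentiableAt ℝ (ricci A) x :=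
  (h.contDiffOn_ricci.contDiffAt (h.isOpen.mem_nhds hx)).differentiableAt one_ne_zero

theorem gaugeDeriv_inverse_mul (k : ι) (hB : DifferentiableAt ℝ B x) :
    gaugeDeriv A k (fun y => H y * B y) x = H x * covDerivTensor A k B x := by
  rw [gaugeDeriv, coordDeriv_mul k (h.differentiableAt_inverse hx) hB, h.compatible x hx k,
    covDerivTensor]
  noncomm_ring

theorem coordDeriv_scalarCurvature_eq_trace (a : ι) :
    coordDeriv a (scalarCurvature A H) x
      = (H x * covDerivTensor A a (ricci A) x).trace := by
  have dRic := h.differentiableAt_ricci hx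
  calc coordDeriv a (scalarCurvature A H) x
      = (coordDeriv a (fun y => H y * ricci A y) x).trace :=
        coordDeriv_linearMap (traceLinearMap ι ℝ ℝ) a ((h.differentiableAt_inverse hx).fun_mul dRic)
    _ = (gaugeDeriv A a (fun y => H y * ricci A y) x).trace := by
        rw [gaugeDeriv, trace_add, trace_sub, trace_mul_comm (A a x), sub_self, add_zero]
    _ = _ := by rw [h.gaugeDeriv_inverse_mul hx a dRic]

theorem covDerivTensor_ricci_apply (a j k : ι) :
    covDerivTensor A a (ricci A) x j k = ∑ p, covDerivCurvature A a p j x p k := by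
  have dF (p : ι) := h.differentiableAt_curvature hx p j
  have hD : coordDeriv a (ricci A) x j k = ∑ p, coordDeriv a (gaugeCurvature A p j) x p k := by
    rw [← coordDeriv_apply a j k (h.differentiableAt_ricci hx)]
    simp only [ricci, of_apply]
    exact (coordDeriv_sum _ a fun p _ => differentiableAt_matrix_apply (dF p) p k).trans
      (Finset.sum_congr rfl fun p _ => coordDeriv_apply a p k (dF p))
  have h₁ : ∑ p, ∑ m, A a x p m * gaugeCurvature A p j x m k
      = ∑ p, ∑ m, A a x m p * gaugeCurvature A m j x p k := Finset.sum_comm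
  have h₂ : ∑ p, ∑ m, A a x m j * gaugeCurvature A p m x p k
      = ∑ m, ∑ p, A a x m j * gaugeCurvature A p m x p k := Finset.sum_comm
  have h₃ : ∑ p, ∑ m, gaugeCurvature A p j x p m * A a x m k
      = ∑ m, ∑ p, gaugeCurvature A p j x p m * A a x m k := Finset.sum_comm
  simp only [covDerivCurvature, gaugeDeriv, covDerivTensor, Matrix.sub_apply, Matrix.add_apply,
    Matrix.sum_apply, Matrix.smul_apply, smul_eq_mul, mul_apply, transpose_apply, hD, ricci,
    of_apply, Finset.sum_sub_distrib, Finset.sum_add_distrib, Finset.mul_sum, Finset.sum_mul]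
  rw [h₁, h₂, h₃]
  ring

theorem mul_inverse_apply_swap {K : Matrix ι ι ℝ} (hK : K * H x = -(H x * Kᵀ)) (j m : ι) :
    (K * H x) m j = -(K * H x) j m := by
  have skew : (K * H x)ᵀ = -(K * H x) := by
    rw [transpose_mul, (h.isSymm x hx).eq, hK, neg_neg]
  exact congr($skew j m)

theorem sum_curvature_mul_inverse_apply (i m : ι) :
    ∑ j, (gaugeCurvature A i j x * H x) m j = (ricci A x * H x) i m := by
  have flip (j : ι) : (gaugeCurvature A i j x * H x) m j
      = (gaugeCurvature A j i x * H x) j m := by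
    rw [h.mul_inverse_apply_swap hx (h.curvature_mul_inverse hx i j), gaugeCurvature_swap A i j,
      Matrix.neg_mul, Matrix.neg_apply]
  simp only [flip, mul_apply, ricci, of_apply, Finset.sum_mul]
  exact Finset.sum_comm

theorem sum_covDerivCurvature_mul_inverse_apply (a i m : ι) :
    ∑ j, (covDerivCurvature A a i j x * H x) m j
      = (covDerivTensor A a (ricci A) x * H x) i m := by
  have flip (j : ι) : (covDerivCurvature A a i j x * H x) m j
      = (covDerivCurvature A a j i x * H x) j m := by
    rw [h.mul_inverse_apply_swap hx (h.covDerivCurvature_mul_inverse hx a i j),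
      covDerivCurvature_swap A a i j, Matrix.neg_mul, Matrix.neg_apply]
  simp only [flip, mul_apply, h.covDerivTensor_ricci_apply hx, Finset.sum_mul]
  exact Finset.sum_comm

theorem covDerivTensor_ricci_sub_swap (a j k : ι) :
    covDerivTensor A a (ricci A) x j k - covDerivTensor A j (ricci A) x a k
      = ∑ p, covDerivCurvature A p a j x p k := by
  rw [h.covDerivTensor_ricci_apply hx, h.covDerivTensor_ricci_apply hx, ← Finset.sum_sub_distrib]
  refine Finset.sum_congr rfl fun p _ => ?_
  have bianchi := congr($(h.covDerivCurvature_secondBianchi hx a p j) p k)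
  rw [covDerivCurvature_swap A p a j, covDerivCurvature_swap A j p a] at bianchi
  simp only [Matrix.add_apply, Matrix.neg_apply, Matrix.zero_apply] at bianchi
  linarith

theorem divergence_ricci_apply (a : ι) :
    divergence A H (ricci A) x a = ∑ p, (covDerivTensor A p (ricci A) x * H x) a p := by
  have symm (p : ι) : (covDerivTensor A p (ricci A) x).IsSymm := by
    rw [IsSymm, ← covDerivTensor_transpose p (h.differentiableAt_ricci hx)]
    exact covDerivTensor_congr h.isOpen (fun y hy => (h.ricci_isSymm hy).eq) p hx
  simp only [divergence, Finset.sum_apply, vecMul, dotProduct, mul_apply]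
  refine Finset.sum_congr rfl fun p _ => Finset.sum_congr rfl fun q _ => ?_
  rw [(symm p).apply a q, (h.isSymm x hx).apply p q, mul_comm]

theorem coordDeriv_scalarCurvature_eq_divergence_add (a : ι) :
    coordDeriv a (scalarCurvature A H) x = divergence A H (ricci A) x a
      + ∑ k, ∑ j, H x k j *
        (covDerivTensor A a (ricci A) x j k - covDerivTensor A j (ricci A) x a k) := by
  have div : divergence A H (ricci A) x a
      = ∑ k, ∑ j, H x k j * covDerivTensor A j (ricci A) x a k := by
    simp only [h.divergence_ricci_apply hx, mul_apply]
    rw [Finset.sum_comm]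
    simp only [mul_comm]
  simp only [h.coordDeriv_scalarCurvature_eq_trace hx, trace, diag_apply, mul_apply, div,
    mul_sub, Finset.sum_sub_distrib, add_sub_cancel]

theorem contracted_secondBianchi (a : ι) :
    coordDeriv a (scalarCurvature A H) x = 2 * divergence A H (ricci A) x a := by
  rw [h.coordDeriv_scalarCurvature_eq_divergence_add hx, two_mul, add_right_inj]
  simp only [h.covDerivTensor_ricci_sub_swap hx, h.divergence_ricci_apply hx,
    ← h.sum_covDerivCurvature_mul_inverse_apply hx, mul_apply, Finset.mul_sum]
  rw [Finset.sum_comm_cycle]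
  refine Finset.sum_congr rfl fun p _ => ?_
  rw [Finset.sum_comm]
  simp only [mul_comm]

theorem covDerivTensor_covDerivForm_sub_swap {X : (ι → ℝ) → ι → ℝ} (hX : ContDiffAt ℝ 2 X x)
    (i j : ι) :
    covDerivTensor A i (covDerivForm A X) x j - covDerivTensor A j (covDerivForm A X) x i
      = -(X x ᵥ* gaugeCurvature A i j x) := by
  have torsion : ∑ m, A i x m j • covDerivForm A X x m
      = ∑ m, A j x m i • covDerivForm A X x m := by
    simp only [h.torsionFree x hx i j]
  have dA := h.differentiableAt_connection hx
  rw [covDerivTensor_covDerivForm_row dA hX, covDerivTensor_covDerivForm_row dA hX, torsion,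
    coordDeriv_comm hX, gaugeCurvature]
  simp only [vecMul_add, vecMul_sub, sub_vecMul, vecMul_vecMul]
  abel

theorem divergence_ricci_of_soliton {X : (ι → ℝ) → ι → ℝ} (hX : ContDiffAt ℝ 2 X x)
    (hsol : EqOn (ricci A) (covDerivForm A X) Ω) :
    divergence A H (ricci A) x = -((ricci A x * H x) *ᵥ X x) := by
  ext a
  have curv : ∑ k, ∑ j, H x k j * (X x ᵥ* gaugeCurvature A a j x) k
      = ((ricci A x * H x) *ᵥ X x) a := by
    simp only [mulVec, dotProduct, ← h.sum_curvature_mul_inverse_apply hx, vecMul, mul_apply,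
      Finset.mul_sum, Finset.sum_mul]
    rw [Finset.sum_comm_cycle]
    refine Finset.sum_congr rfl fun m _ => ?_
    rw [Finset.sum_comm]
    exact Finset.sum_congr rfl fun j _ => Finset.sum_congr rfl fun k _ => by ring
  have ricciIdentity (j k : ι) : covDerivTensor A a (ricci A) x j k
      - covDerivTensor A j (ricci A) x a k = -(X x ᵥ* gaugeCurvature A a j x) k := by
    rw [covDerivTensor_congr h.isOpen hsol a hx, covDerivTensor_congr h.isOpen hsol j hx]
    exact congrFun (h.covDerivTensor_covDerivForm_sub_swap hx hX a j) k
  have half := h.coordDeriv_scalarCurvature_eq_divergence_add hx a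
  simp only [h.contracted_secondBianchi hx, ricciIdentity, mul_neg, Finset.sum_neg_distrib,
    curv] at half
  rw [Pi.neg_apply]
  linarith

section Contraction

variable {U : (ι → ℝ) → Matrix ι ι ℝ} {X : (ι → ℝ) → ι → ℝ}

theorem gaugeDeriv_neg_inverse_mul_transpose (hU : DifferentiableAt ℝ U x) (k : ι)
    (hpar : covDerivTensor A k U x = 0) :
    gaugeDeriv A k (fun y => -(H y * (U y)ᵀ)) x = 0 := by
  rw [gaugeDeriv_neg, h.gaugeDeriv_inverse_mul hx k (differentiableAt_transpose hU),
    covDerivTensor_transpose k hU, hpar, transpose_zero, mul_zero, neg_zero]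

theorem differentiableAt_neg_inverse_mul_transpose (hU : DifferentiableAt ℝ U x) :
    DifferentiableAt ℝ (fun y => -(H y * (U y)ᵀ)) x :=
  ((h.differentiableAt_inverse hx).fun_mul (differentiableAt_transpose hU)).fun_neg

theorem covDerivForm_contraction (hX : DifferentiableAt ℝ X x) (hU : DifferentiableAt ℝ U x)
    (hpar : ∀ k, covDerivTensor A k U x = 0) :
    covDerivForm A (fun y => contraction (H y) (U y) (X y)) x
      = covDerivForm A X x * (-(H x * (U x)ᵀ)) := by
  rw [covDerivForm_congr h.isOpen
      (fun y hy => contraction_eq_vecMul (h.isSymm y hy) (U y) (X y)) hx]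
  exact covDerivForm_vecMul_of_parallel hX (h.differentiableAt_neg_inverse_mul_transpose hx hU)
    fun k => h.gaugeDeriv_neg_inverse_mul_transpose hx hU k (hpar k)

theorem divergence_covDerivForm_contraction (hX : ∀ y ∈ Ω, ContDiffAt ℝ 2 X y)
    (hU : ∀ y ∈ Ω, DifferentiableAt ℝ U y) (hpar : ∀ y ∈ Ω, ∀ k, covDerivTensor A k U y = 0) :
    divergence A H (covDerivForm A fun y => contraction (H y) (U y) (X y)) x
      = contraction (H x) (U x) (divergence A H (covDerivForm A X) x) := by
  have gradient : EqOn (covDerivForm A fun y => contraction (H y) (U y) (X y))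
      (fun y => covDerivForm A X y * (-(H y * (U y)ᵀ))) Ω := fun y hy =>
    h.covDerivForm_contraction hy ((hX y hy).differentiableAt two_ne_zero) (hU y hy) (hpar y hy)
  rw [divergence_congr h.isOpen gradient hx, contraction_eq_vecMul (h.isSymm x hx)]
  exact divergence_mul_of_parallel
    (differentiableAt_covDerivForm (h.differentiableAt_connection hx) (hX x hx))
    (h.differentiableAt_neg_inverse_mul_transpose hx (hU x hx))
    fun k => h.gaugeDeriv_neg_inverse_mul_transpose hx (hU x hx) k (hpar x hx k)

end Contraction

end IsLeviCivitaOn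
end LeviCivita

section Time

variable {ι : Type*} [Fintype ι]

theorem hasDerivAt_mulVec {M : ℝ → Matrix ι ι ℝ} {X : ℝ → ι → ℝ} {M' : Matrix ι ι ℝ}
    {X' : ι → ℝ} {t : ℝ} (hM : HasDerivAt M M' t) (hX : HasDerivAt X X' t) :
    HasDerivAt (fun s => M s *ᵥ X s) (M t *ᵥ X' + M' *ᵥ X t) t :=
  (mulVecBilin ℝ ℝ : Matrix ι ι ℝ →ₗ[ℝ] (ι → ℝ) →ₗ[ℝ] ι → ℝ).toContinuousBilinearMap
    |>.hasDerivAt_of_bilinear (fun _ => hM) (fun _ => hX)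

theorem hasDerivAt_contraction_of_soliton {H U : ℝ → Matrix ι ι ℝ} {X : ℝ → ι → ℝ}
    {P : Matrix ι ι ℝ} {t : ℝ} (hH : HasDerivAt H (2 • (H t * P * H t)) t)
    (hU : HasDerivAt U 0 t) (hX : HasDerivAt X (-(2 • (P * H t) *ᵥ X t)) t) :
    HasDerivAt (fun s => contraction (H s) (U s) (X s)) 0 t := by
  have cancel : H t *ᵥ (-(2 • (P * H t) *ᵥ X t)) + (2 • (H t * P * H t)) *ᵥ X t = 0 := by
    simp only [mulVec_neg, mulVec_smul, mulVec_mulVec, smul_mulVec, Matrix.mul_assoc,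
      neg_add_cancel]
  have := hasDerivAt_mulVec hU (hasDerivAt_mulVec hH hX)
  rw [cancel, mulVec_zero, zero_mulVec, add_zero] at this
  simpa only [neg_zero] using! this.fun_neg

-- The two-sided derivative at `a` involves the arbitrary values of `f` left of `a`: where it exists
-- it is the right derivative, which vanishes by continuity, and otherwise it is `0` by convention.
theorem deriv_eq_zero_of_Ico {f : ℝ → ℝ} {a b : ℝ} (hf : ContinuousOn f (Ico a b))
    (hf' : ∀ t ∈ Ioo a b, HasDerivAt f 0 t) : ∀ t ∈ Ico a b, deriv f t = 0 := by
  rintro t ⟨hat, htb⟩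
  obtain rfl | hat := hat.eq_or_lt
  · have nhds : Ioo a b ∈ 𝓝[>] a := Ioo_mem_nhdsGT htb
    have right : HasDerivWithinAt f 0 (Ici a) a :=
      hasDerivWithinAt_Ici_of_tendsto_deriv
        (fun t ht => (hf' t ht).differentiableAt.differentiableWithinAt)
        ((hf a ⟨le_rfl, htb⟩).mono Ioo_subset_Ico_self) nhds
        (tendsto_const_nhds.congr' <| by
          filter_upwards [nhds] with t ht using (hf' t ht).deriv.symm)
    by_cases hd : DifferentiableAt ℝ f a
    · exact (uniqueDiffOn_Ici a a self_mem_Ici).eq_deriv _ hd.hasDerivAt.hasDerivWithinAt right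
    · exact deriv_zero_of_not_differentiableAt hd
  · exact (hf' t ⟨hat, htb⟩).deriv

end Time

section MatrixInverse

variable {κ E : Type*} [Fintype κ] [DecidableEq κ]

theorem eq_ringInverse_of_mul_eq_one {M N : Matrix κ κ ℝ} (h : M * N = 1) :
    N = Ring.inverse M := by
  rw [← nonsing_inv_eq_ringInverse, inv_eq_right_inv h]

variable [NormedAddCommGroup E] [NormedSpace ℝ E]
  {G N : E → Matrix κ κ ℝ}

theorem contDiffOn_of_mul_eq_one {s : Set E} {k : WithTop ℕ∞} (hG : ContDiffOn ℝ k G s)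
    (h : ∀ y ∈ s, G y * N y = 1) : ContDiffOn ℝ k N s := by
  intro y hy
  have inv : ContDiffAt ℝ k Ring.inverse (G y) :=
    contDiffAt_ringInverse ℝ (.mkOfMulEqOne _ _ (h y hy))
  exact (inv.comp_contDiffWithinAt y (hG y hy)).congr
    (fun z hz => eq_ringInverse_of_mul_eq_one (h z hz)) (eq_ringInverse_of_mul_eq_one (h y hy))

theorem hasFDerivAt_of_mul_eq_one {y : E} {G' : E →L[ℝ] Matrix κ κ ℝ} (hG : HasFDerivAt G G' y)
    (h : ∀ᶠ z in 𝓝 y, G z * N z = 1) :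
    HasFDerivAt N (-(ContinuousLinearMap.mulLeftRight ℝ _ (N y) (N y)) ∘L G') y :=
  ((hasFDerivAt_ringInverse (𝕜 := ℝ) (.mkOfMulEqOne _ _ h.self_of_nhds)).comp y
    hG).congr_of_eventuallyEq (h.mono fun _ => eq_ringInverse_of_mul_eq_one)

theorem hasDerivAt_of_mul_eq_one {G N : ℝ → Matrix κ κ ℝ} {t : ℝ} {G' : Matrix κ κ ℝ}
    (hG : HasDerivAt G G' t) (h : ∀ᶠ s in 𝓝 t, G s * N s = 1) :
    HasDerivAt N (-(N t * G' * N t)) t := by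
  refine (hasFDerivAt_of_mul_eq_one hG.hasFDerivAt h).hasDerivAt.congr_deriv ?_
  change -(N t * (1 : ℝ) • G' * N t) = _
  rw [one_smul]

theorem coordDeriv_of_mul_eq_one {ι : Type*} [Fintype ι] [DecidableEq ι]
    {G N : (ι → ℝ) → Matrix κ κ ℝ} {x : ι → ℝ} (i : ι) (hG : DifferentiableAt ℝ G x)
    (h : ∀ᶠ y in 𝓝 x, G y * N y = 1) :
    coordDeriv i N x = -(N x * coordDeriv i G x * N x) :=
  congr($((hasFDerivAt_of_mul_eq_one hG.hasFDerivAt h).fderiv) (Pi.single i 1))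

end MatrixInverse

section Coordinates

variable {n : ℕ} {Ω : Set (Fin n → ℝ)} {g ginv B : Met n} {V : Fin n → Fld n} {t : ℝ}
  {x : Fin n → ℝ}

/-- The covector `(V_j(x,t))`. -/
def formAt (V : Fin n → Fld n) (t : ℝ) (x : Fin n → ℝ) : Fin n → ℝ :=
  fun j => V j x t

/-- The matrix `(B_{ij}(x,t))` of a `2`-tensor; time comes first so that fixing it leaves a
function on `ℝⁿ`. -/
def tensorAt (B : Met n) (t : ℝ) (x : Fin n → ℝ) : Matrix (Fin n) (Fin n) ℝ :=
  of fun i j => B i j x t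

/-- The Christoffel matrix `(Aᵢ)^l_k = Γ^l_{ik}` of `g` at time `t`. -/
def christoffelAt (g ginv : Met n) (t : ℝ) (i : Fin n) (x : Fin n → ℝ) :
    Matrix (Fin n) (Fin n) ℝ :=
  of fun l k => Gamma g ginv l i k x t

/-- The Christoffel symbols of the first kind `Γ_{l,ik}`, as a matrix in the indices `l, k`. -/
def christoffelFirst (G : (Fin n → ℝ) → Matrix (Fin n) (Fin n) ℝ) (i : Fin n) (x : Fin n → ℝ) :
    Matrix (Fin n) (Fin n) ℝ :=
  of fun l k => (1 / 2) * (coordDeriv i G x k l + coordDeriv k G x i l - coordDeriv l G x i k)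

theorem christoffelFirst_add_transpose {G : (Fin n → ℝ) → Matrix (Fin n) (Fin n) ℝ}
    (hG : ∀ k, (coordDeriv k G x).IsSymm) (i : Fin n) :
    christoffelFirst G i x + (christoffelFirst G i x)ᵀ = coordDeriv i G x := by
  ext l k
  simp only [christoffelFirst, Matrix.add_apply, transpose_apply, of_apply, (hG i).apply k l]
  ring

theorem christoffelAt_eq (hg : DifferentiableAt ℝ (tensorAt g t) x) (i : Fin n) :
    christoffelAt g ginv t i x = tensorAt ginv t x * christoffelFirst (tensorAt g t) i x := by
  have hspd (a b c : Fin n) : spd a (g b c) x t = coordDeriv a (tensorAt g t) x b c :=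
    coordDeriv_apply a b c hg
  ext l k
  simp only [christoffelAt, Gamma, christoffelFirst, of_apply, mul_apply, hspd, tensorAt,
    Finset.mul_sum]
  exact Finset.sum_congr rfl fun m _ => by ring

theorem contDiffOn_christoffelAt (hΩ : IsOpen Ω) (hg : ContDiffOn ℝ 3 (tensorAt g t) Ω)
    (hginv : ContDiffOn ℝ 2 (tensorAt ginv t) Ω) (i : Fin n) :
    ContDiffOn ℝ 2 (christoffelAt g ginv t i) Ω := by
  have dg (a b c : Fin n) : ContDiffOn ℝ 2 (fun y => coordDeriv a (tensorAt g t) y b c) Ω :=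
    contDiffOn_matrix_apply (contDiffOn_coordDeriv hΩ hg (by norm_num) a) b c
  have first : ContDiffOn ℝ 2 (christoffelFirst (tensorAt g t) i) Ω :=
    contDiffOn_matrix fun l k => contDiffOn_const.mul (((dg i k l).add (dg k i l)).sub (dg l i k))
  exact (hginv.mul first).congr fun y hy =>
    christoffelAt_eq ((hg.contDiffAt (hΩ.mem_nhds hy)).differentiableAt (by norm_num)) i

theorem isLeviCivitaOn_christoffelAt (hΩ : IsOpen Ω) (hg : ContDiffOn ℝ 3 (tensorAt g t) Ω)
    (hsymm : ∀ y ∈ Ω, (tensorAt g t y).IsSymm)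
    (hinv : ∀ y ∈ Ω, tensorAt g t y * tensorAt ginv t y = 1) :
    IsLeviCivitaOn (christoffelAt g ginv t) (tensorAt ginv t) Ω := by
  have dg {y} (hy : y ∈ Ω) : DifferentiableAt ℝ (tensorAt g t) y :=
    (hg.contDiffAt (hΩ.mem_nhds hy)).differentiableAt (by norm_num)
  have dsymm {y} (hy : y ∈ Ω) (k : Fin n) : (coordDeriv k (tensorAt g t) y).IsSymm := by
    rw [IsSymm, ← coordDeriv_transpose k (dg hy)]
    exact coordDeriv_congr hΩ (fun z hz => (hsymm z hz).eq) k hy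
  have hginv : ContDiffOn ℝ 2 (tensorAt ginv t) Ω :=
    contDiffOn_of_mul_eq_one (hg.of_le (by norm_num)) hinv
  have inv_symm {y} (hy : y ∈ Ω) : (tensorAt ginv t y).IsSymm := by
    rw [← inv_eq_right_inv (hinv y hy)]
    exact (hsymm y hy).inv
  exact
    { isOpen := hΩ
      contDiffOn_connection := contDiffOn_christoffelAt hΩ hg hginv
      contDiffOn_inverse := hginv
      isUnit := fun y hy => .of_mul_eq_one_right _ (hinv y hy)
      isSymm := fun y hy => inv_symm hy
      torsionFree := fun y hy i j l => by
        rw [christoffelAt_eq (dg hy), christoffelAt_eq (dg hy), mul_apply, mul_apply]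
        simp only [christoffelFirst, of_apply, (dsymm hy _).apply i j, add_comm]
      compatible := fun y hy i => by
        rw [coordDeriv_of_mul_eq_one i (dg hy) (Filter.eventually_of_mem (hΩ.mem_nhds hy) hinv),
          ← christoffelFirst_add_transpose (dsymm hy), christoffelAt_eq (dg hy), transpose_mul,
          (inv_symm hy).eq]
        noncomm_ring }

theorem cd1_eq_covDerivForm (hV : DifferentiableAt ℝ (formAt V t) x) (k j : Fin n) :
    cd1 g ginv k V j x t = covDerivForm (christoffelAt g ginv t) (formAt V t) x k j := by
  have hspd : spd k (V j) x t = coordDeriv k (formAt V t) x j :=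
    coordDeriv_linearMap (LinearMap.proj j : (Fin n → ℝ) →ₗ[ℝ] ℝ) k hV
  simp only [cd1, hspd, covDerivForm, of_apply, Pi.sub_apply, vecMul, dotProduct, formAt,
    christoffelAt, mul_comm]

theorem cd2_eq_covDerivTensor (hB : DifferentiableAt ℝ (tensorAt B t) x) (k i j : Fin n) :
    cd2 g ginv k B i j x t = covDerivTensor (christoffelAt g ginv t) k (tensorAt B t) x i j := by
  have hspd : spd k (B i j) x t = coordDeriv k (tensorAt B t) x i j := coordDeriv_apply k i j hB
  simp only [cd2, hspd, covDerivTensor, Matrix.sub_apply, mul_apply, transpose_apply, tensorAt,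
    christoffelAt, of_apply, mul_comm (B i _ x t)]

theorem lap1_eq_divergence (hΩ : IsOpen Ω)
    (hA : ∀ k, DifferentiableAt ℝ (christoffelAt g ginv t k) x)
    (hV : ∀ y ∈ Ω, ContDiffAt ℝ 2 (formAt V t) y) (hx : x ∈ Ω) (j : Fin n) :
    lap1 g ginv V j x t = divergence (christoffelAt g ginv t) (tensorAt ginv t)
      (covDerivForm (christoffelAt g ginv t) (formAt V t)) x j := by
  have gradient : EqOn (tensorAt (fun k => cd1 g ginv k V) t)
      (covDerivForm (christoffelAt g ginv t) (formAt V t)) Ω := fun y hy => by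
    ext k j
    exact cd1_eq_covDerivForm ((hV y hy).differentiableAt two_ne_zero) k j
  have dB : DifferentiableAt ℝ (tensorAt (fun k => cd1 g ginv k V) t) x :=
    (differentiableAt_covDerivForm hA (hV x hx)).congr_of_eventuallyEq
      (gradient.eventuallyEq_of_mem (hΩ.mem_nhds hx))
  rw [← divergence_congr hΩ gradient hx]
  simp only [divergence, Finset.sum_apply, vecMul, dotProduct, ← cd2_eq_covDerivTensor dB]
  rfl

theorem lap02_eq_zero_of_parallel (hΩ : IsOpen Ω) (hx : x ∈ Ω)
    (hB : ∀ y ∈ Ω, ∀ k i j, cd2 g ginv k B i j y t = 0) (i j : Fin n) :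
    lap02 g ginv B i j x t = 0 := by
  have hspd (p q : Fin n) : spd p (cd2 g ginv q B i j) x t = 0 := by
    have := coordDeriv_congr hΩ (fun y hy => hB y hy q i j) p hx
    exact this.trans (by simp [coordDeriv])
  simp only [lap02, hspd, hB x hx, mul_zero, Finset.sum_const_zero, sub_zero]

theorem Ric_eq_ricci (hA : ∀ i, DifferentiableAt ℝ (christoffelAt g ginv t i) x)
    (j k : Fin n) : Ric g ginv j k x t = ricci (christoffelAt g ginv t) x j k := by
  have hspd (a b l c : Fin n) : spd a (Gamma g ginv l b c) x t
      = coordDeriv a (christoffelAt g ginv t b) x l c := coordDeriv_apply a l c (hA b)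
  simp only [Ric, Riem, hspd, ricci, of_apply, gaugeCurvature, Matrix.add_apply,
    Matrix.sub_apply, mul_apply, christoffelAt, ← Finset.sum_sub_distrib, mul_comm]

theorem spd_Scal_eq (h : IsLeviCivitaOn (christoffelAt g ginv t) (tensorAt ginv t) Ω)
    (hx : x ∈ Ω) (p : Fin n) :
    spd p (Scal g ginv) x t
      = coordDeriv p (scalarCurvature (christoffelAt g ginv t) (tensorAt ginv t)) x := by
  refine coordDeriv_congr h.isOpen (fun y hy => ?_) p hx
  simp only [Scal, Ric_eq_ricci (h.differentiableAt_connection hy), scalarCurvature, trace,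
    diag_apply, mul_apply, tensorAt, of_apply, (h.ricci_isSymm hy).apply]

end Coordinates

section Flow

variable {n : ℕ} {Ω : Set (Fin n → ℝ)} {T : ℝ} {g ginv B U : Met n} {V W : Fin n → Fld n}
  {t : ℝ} {x : Fin n → ℝ}

/-- A `2`-tensor as a function on space-time. -/
def spacetimeTensor (B : Met n) (p : (Fin n → ℝ) × ℝ) : Matrix (Fin n) (Fin n) ℝ :=
  tensorAt B p.2 p.1

/-- A `1`-form as a function on space-time. -/
def spacetimeForm (V : Fin n → Fld n) (p : (Fin n → ℝ) × ℝ) : Fin n → ℝ :=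
  formAt V p.2 p.1

theorem contDiffOn_tensorAt {k : WithTop ℕ∞}
    (hB : ContDiffOn ℝ k (spacetimeTensor B) (Ω ×ˢ Ico 0 T)) (ht : t ∈ Ico 0 T) :
    ContDiffOn ℝ k (tensorAt B t) Ω :=
  hB.comp (contDiff_prodMk_left t).contDiffOn fun _ hy => ⟨hy, ht⟩

theorem contDiffOn_formAt {k : WithTop ℕ∞}
    (hV : ContDiffOn ℝ k (spacetimeForm V) (Ω ×ˢ Ico 0 T)) (ht : t ∈ Ico 0 T) :
    ContDiffOn ℝ k (formAt V t) Ω :=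
  hV.comp (contDiff_prodMk_left t).contDiffOn fun _ hy => ⟨hy, ht⟩

theorem hasDerivAt_tensorAt (hB : ContDiffOn ℝ 1 (spacetimeTensor B) (Ω ×ˢ Ico 0 T))
    (hx : x ∈ Ω) (ht : t ∈ Ioo 0 T) :
    HasDerivAt (fun s => tensorAt B s x) (of fun i j => tpd (B i j) x t) t := by
  have slice : ContDiffOn ℝ 1 (fun s => tensorAt B s x) (Ico 0 T) :=
    hB.comp (contDiff_prodMk_right x).contDiffOn fun _ hs => ⟨hx, hs⟩
  have hd := ((slice.contDiffAt (Ico_mem_nhds ht.1 ht.2)).differentiableAt one_ne_zero).hasDerivAt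
  refine hd.congr_deriv ?_
  ext i j
  exact ((entryLinearMap ℝ ℝ i j).toContinuousLinearMap.hasFDerivAt.comp_hasDerivAt t hd).deriv.symm

theorem hasDerivAt_formAt (hV : ContDiffOn ℝ 1 (spacetimeForm V) (Ω ×ˢ Ico 0 T))
    (hx : x ∈ Ω) (ht : t ∈ Ioo 0 T) :
    HasDerivAt (fun s => formAt V s x) (fun j => tpd (V j) x t) t := by
  have slice : ContDiffOn ℝ 1 (fun s => formAt V s x) (Ico 0 T) :=
    hV.comp (contDiff_prodMk_right x).contDiffOn fun _ hs => ⟨hx, hs⟩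
  have hd := ((slice.contDiffAt (Ico_mem_nhds ht.1 ht.2)).differentiableAt one_ne_zero).hasDerivAt
  exact hasDerivAt_pi.mpr fun j => (hasDerivAt_pi.mp hd j).differentiableAt.hasDerivAt

/-- A `C³` Ricci flow `∂g/∂t = -2 Ric` on `Ω × [0,T)` of nondegenerate symmetric `2`-tensors `g` of
arbitrary signature, with pointwise inverse `ginv`. -/
structure PseudoRicciFlow (Ω : Set (Fin n → ℝ)) (T : ℝ) (g ginv : Met n) : Prop where
  isOpen : IsOpen Ω
  contDiffOn : ContDiffOn ℝ 3 (spacetimeTensor g) (Ω ×ˢ Ico 0 T)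
  isSymm : ∀ x ∈ Ω, ∀ t ∈ Ico 0 T, (tensorAt g t x).IsSymm
  mul_inverse : ∀ x ∈ Ω, ∀ t ∈ Ico 0 T, tensorAt g t x * tensorAt ginv t x = 1
  evolution : ∀ x ∈ Ω, ∀ t ∈ Ico 0 T, ∀ i j, tpd (g i j) x t = -2 * Ric g ginv i j x t

/-- A `1`-form `V` exhibiting `g` as a (steady) gradient Ricci soliton, `Ric = ∇V`, and evolving by
`∂V/∂t = ΔV - Ric(V)`. -/
structure IsSolitonForm (Ω : Set (Fin n → ℝ)) (T : ℝ) (g ginv : Met n) (V : Fin n → Fld n) :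
    Prop where
  contDiffOn : ContDiffOn ℝ 2 (spacetimeForm V) (Ω ×ˢ Ico 0 T)
  soliton : ∀ x ∈ Ω, ∀ t ∈ Ico 0 T, ∀ i j, Ric g ginv i j x t = cd1 g ginv i V j x t
  evolution : ∀ x ∈ Ω, ∀ t ∈ Ico 0 T, ∀ j, tpd (V j) x t =
    lap1 g ginv V j x t - ∑ l, ∑ m, Ric g ginv j l x t * ginv l m x t * V m x t

/-- A `2`-tensor `U`, not necessarily antisymmetric, that is parallel at each time and solves the
heat equation. -/
structure IsParallelHeatSolution (Ω : Set (Fin n → ℝ)) (T : ℝ) (g ginv U : Met n) : Prop where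
  contDiffOn : ContDiffOn ℝ 2 (spacetimeTensor U) (Ω ×ˢ Ico 0 T)
  parallel : ∀ x ∈ Ω, ∀ t ∈ Ico 0 T, ∀ k i j, cd2 g ginv k U i j x t = 0
  heat : ∀ x ∈ Ω, ∀ t ∈ Ico 0 T, ∀ i j, tpd (U i j) x t = lap02 g ginv U i j x t

theorem formAt_eq_contraction
    (hW : ∀ i, W i = fun x t => -(∑ j, ∑ k, U i j x t * ginv j k x t * V k x t)) (t : ℝ) :
    formAt W t = fun y => contraction (tensorAt ginv t y) (tensorAt U t y) (formAt V t y) := by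
  ext y i
  simp only [formAt, hW, contraction, tensorAt, Pi.neg_apply, mulVec, dotProduct, of_apply,
    Finset.mul_sum, mul_assoc]

theorem RicciFlow.pseudoRicciFlow (hg : RicciFlow Ω T g ginv) : PseudoRicciFlow Ω T g ginv := by
  obtain ⟨hΩ, -, -, hsmooth, hpt⟩ := hg
  exact
    { isOpen := hΩ
      contDiffOn := contDiffOn_matrix fun i j => (hsmooth i j).of_le (WithTop.coe_le_coe.mpr le_top)
      isSymm := fun x hx t ht => IsSymm.ext fun i j => (hpt x hx t ht).1 j i
      mul_inverse := fun x hx t ht => by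
        ext i j
        rw [mul_apply, one_apply]
        exact (hpt x hx t ht).2.2.1 i j
      evolution := fun x hx t ht => (hpt x hx t ht).2.2.2 }

namespace PseudoRicciFlow

variable (hg : PseudoRicciFlow Ω T g ginv)
include hg

theorem isLeviCivitaOn (ht : t ∈ Ico 0 T) :
    IsLeviCivitaOn (christoffelAt g ginv t) (tensorAt ginv t) Ω :=
  isLeviCivitaOn_christoffelAt hg.isOpen (contDiffOn_tensorAt hg.contDiffOn ht)
    (fun y hy => hg.isSymm y hy t ht) fun y hy => hg.mul_inverse y hy t ht

theorem contDiffOn_inverse : ContDiffOn ℝ 3 (spacetimeTensor ginv) (Ω ×ˢ Ico 0 T) :=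
  contDiffOn_of_mul_eq_one hg.contDiffOn fun p hp => hg.mul_inverse p.1 hp.1 p.2 hp.2

theorem hasDerivAt_inverse (hx : x ∈ Ω) (ht : t ∈ Ioo 0 T) :
    HasDerivAt (fun s => tensorAt ginv s x) (2 • (tensorAt ginv t x *
      ricci (christoffelAt g ginv t) x * tensorAt ginv t x)) t := by
  have htI := Ioo_subset_Ico_self ht
  have hg' : HasDerivAt (fun s => tensorAt g s x) (-(2 • ricci (christoffelAt g ginv t) x)) t := by
    refine (hasDerivAt_tensorAt (hg.contDiffOn.of_le (by norm_num)) hx ht).congr_deriv ?_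
    ext i j
    rw [of_apply, hg.evolution x hx t htI,
      Ric_eq_ricci ((hg.isLeviCivitaOn htI).differentiableAt_connection hx), two_nsmul,
      Matrix.neg_apply, Matrix.add_apply]
    ring
  refine (hasDerivAt_of_mul_eq_one hg' ?_).congr_deriv (by noncomm_ring)
  filter_upwards [Ico_mem_nhds ht.1 ht.2] with s hs using hg.mul_inverse x hx s hs

theorem ricci_eqOn_covDerivForm (hV : IsSolitonForm Ω T g ginv V) (ht : t ∈ Ico 0 T) :
    EqOn (ricci (christoffelAt g ginv t)) (covDerivForm (christoffelAt g ginv t) (formAt V t))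
      Ω := fun y hy => by
  have dV := ((contDiffOn_formAt hV.contDiffOn ht).contDiffAt
    (hg.isOpen.mem_nhds hy)).differentiableAt two_ne_zero
  ext i j
  rw [← Ric_eq_ricci ((hg.isLeviCivitaOn ht).differentiableAt_connection hy),
    hV.soliton y hy t ht, cd1_eq_covDerivForm dV]

theorem covDerivTensor_eq_zero (hU : IsParallelHeatSolution Ω T g ginv U) (hx : x ∈ Ω)
    (ht : t ∈ Ico 0 T) (k : Fin n) :
    covDerivTensor (christoffelAt g ginv t) k (tensorAt U t) x = 0 := by
  have dU := ((contDiffOn_tensorAt hU.contDiffOn ht).contDiffAt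
    (hg.isOpen.mem_nhds hx)).differentiableAt two_ne_zero
  ext i j
  rw [← cd2_eq_covDerivTensor dU, hU.parallel x hx t ht, Matrix.zero_apply]

theorem lap1_eq_divergence_ricci (hV : IsSolitonForm Ω T g ginv V) (hx : x ∈ Ω)
    (ht : t ∈ Ico 0 T) (j : Fin n) :
    lap1 g ginv V j x t = divergence (christoffelAt g ginv t) (tensorAt ginv t)
      (ricci (christoffelAt g ginv t)) x j := by
  rw [lap1_eq_divergence hg.isOpen ((hg.isLeviCivitaOn ht).differentiableAt_connection hx)
      (fun y hy => (contDiffOn_formAt hV.contDiffOn ht).contDiffAt (hg.isOpen.mem_nhds hy)) hx,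
    divergence_congr hg.isOpen (hg.ricci_eqOn_covDerivForm hV ht) hx]

theorem hasDerivAt_solitonForm (hV : IsSolitonForm Ω T g ginv V) (hx : x ∈ Ω)
    (ht : t ∈ Ioo 0 T) :
    HasDerivAt (fun s => formAt V s x) (-(2 •
      (ricci (christoffelAt g ginv t) x * tensorAt ginv t x) *ᵥ formAt V t x)) t := by
  have htI := Ioo_subset_Ico_self ht
  have hA := hg.isLeviCivitaOn htI
  refine (hasDerivAt_formAt (hV.contDiffOn.of_le one_le_two) hx ht).congr_deriv ?_
  have reaction (j : Fin n) : ∑ l, ∑ m, Ric g ginv j l x t * ginv l m x t * V m x t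
      = ((ricci (christoffelAt g ginv t) x * tensorAt ginv t x) *ᵥ formAt V t x) j := by
    simp only [Ric_eq_ricci (hA.differentiableAt_connection hx), mulVec, dotProduct, mul_apply,
      Finset.sum_mul, tensorAt, of_apply, formAt]
    exact Finset.sum_comm
  ext j
  rw [hV.evolution x hx t htI, hg.lap1_eq_divergence_ricci hV hx htI, reaction,
    hA.divergence_ricci_of_soliton hx ((contDiffOn_formAt hV.contDiffOn htI).contDiffAt
      (hg.isOpen.mem_nhds hx)) (hg.ricci_eqOn_covDerivForm hV htI)]
  simp only [two_nsmul, Pi.neg_apply, Pi.add_apply]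
  ring

theorem hasDerivAt_heatSolution (hU : IsParallelHeatSolution Ω T g ginv U) (hx : x ∈ Ω)
    (ht : t ∈ Ioo 0 T) : HasDerivAt (fun s => tensorAt U s x) 0 t := by
  have htI := Ioo_subset_Ico_self ht
  refine (hasDerivAt_tensorAt (hU.contDiffOn.of_le one_le_two) hx ht).congr_deriv ?_
  ext i j
  rw [of_apply, hU.heat x hx t htI, Matrix.zero_apply]
  exact lap02_eq_zero_of_parallel hg.isOpen hx (fun y hy => hU.parallel y hy t htI) i j

section Contraction

variable (hV : IsSolitonForm Ω T g ginv V) (hU : IsParallelHeatSolution Ω T g ginv U)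
include hV hU

theorem contDiffOn_contraction : ContDiffOn ℝ 2 (fun p => contraction (spacetimeTensor ginv p)
    (spacetimeTensor U p) (spacetimeForm V p)) (Ω ×ˢ Ico 0 T) :=
  (contDiffOn_mulVec hU.contDiffOn
    (contDiffOn_mulVec (hg.contDiffOn_inverse.of_le (by norm_num)) hV.contDiffOn)).neg

theorem deriv_contraction_eq_zero (hx : x ∈ Ω) (i : Fin n) : ∀ t ∈ Ico 0 T,
    deriv (fun s => contraction (tensorAt ginv s x) (tensorAt U s x) (formAt V s x) i) t = 0 := by
  refine deriv_eq_zero_of_Ico ?_ fun t ht => hasDerivAt_pi.mp (hasDerivAt_contraction_of_soliton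
    (hg.hasDerivAt_inverse hx ht) (hg.hasDerivAt_heatSolution hU hx ht)
    (hg.hasDerivAt_solitonForm hV hx ht)) i
  exact (contDiffOn_pi.mp (hg.contDiffOn_contraction hV hU) i).continuousOn.comp
    (Continuous.prodMk_right x).continuousOn fun s hs => ⟨hx, hs⟩

variable (hW : ∀ i, W i = fun x t => -(∑ j, ∑ k, U i j x t * ginv j k x t * V k x t))
include hW

theorem tpd_contraction (hx : x ∈ Ω) (ht : t ∈ Ico 0 T) (i : Fin n) : tpd (W i) x t = 0 := by
  have slice : (fun s => W i x s) = fun s =>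
      contraction (tensorAt ginv s x) (tensorAt U s x) (formAt V s x) i :=
    funext fun s => congr($(formAt_eq_contraction hW s) x i)
  rw [tpd, slice]
  exact hg.deriv_contraction_eq_zero hV hU hx i t ht

theorem contDiffOn_formAt_contraction (ht : t ∈ Ico 0 T) : ContDiffOn ℝ 2 (formAt W t) Ω := by
  rw [formAt_eq_contraction hW]
  exact (hg.contDiffOn_contraction hV hU).comp (contDiff_prodMk_left t).contDiffOn
    fun _ hy => ⟨hy, ht⟩

theorem cd1_contraction (hx : x ∈ Ω) (ht : t ∈ Ico 0 T) (k i : Fin n) :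
    cd1 g ginv k W i x t = -(∑ j, ∑ l, U i j x t * ginv j l x t * Ric g ginv k l x t) := by
  have hA := hg.isLeviCivitaOn ht
  have atx := hg.isOpen.mem_nhds hx
  have dW := ((hg.contDiffOn_formAt_contraction hV hU hW ht).contDiffAt atx).differentiableAt
    two_ne_zero
  have dV := ((contDiffOn_formAt hV.contDiffOn ht).contDiffAt atx).differentiableAt two_ne_zero
  have dU := ((contDiffOn_tensorAt hU.contDiffOn ht).contDiffAt atx).differentiableAt two_ne_zero
  rw [cd1_eq_covDerivForm dW, formAt_eq_contraction hW,
    hA.covDerivForm_contraction hx dV dU (hg.covDerivTensor_eq_zero hU hx ht),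
    ← hg.ricci_eqOn_covDerivForm hV ht hx, Matrix.mul_neg, Matrix.neg_apply, ← Matrix.mul_assoc]
  simp only [Ric_eq_ricci (hA.differentiableAt_connection hx)]
  simp only [mul_apply, transpose_apply, Finset.sum_mul]
  refine congrArg Neg.neg (Finset.sum_congr rfl fun j _ => Finset.sum_congr rfl fun l _ => ?_)
  rw [(hA.isSymm x hx).apply j l]
  simp only [tensorAt, of_apply]
  ring

theorem lap1_contraction (hx : x ∈ Ω) (ht : t ∈ Ico 0 T) (i : Fin n) :
    lap1 g ginv W i x t
      = -((1 / 2) * ∑ p, ∑ q, ginv p q x t * spd p (Scal g ginv) x t * U i q x t) := by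
  have hA := hg.isLeviCivitaOn ht
  have atΩ {y} (hy : y ∈ Ω) := hg.isOpen.mem_nhds hy
  have half (p : Fin n) : divergence (christoffelAt g ginv t) (tensorAt ginv t)
      (ricci (christoffelAt g ginv t)) x p = (1 / 2) * spd p (Scal g ginv) x t := by
    rw [spd_Scal_eq hA hx, hA.contracted_secondBianchi hx]
    ring
  rw [lap1_eq_divergence hg.isOpen (hA.differentiableAt_connection hx)
      (fun y hy => (hg.contDiffOn_formAt_contraction hV hU hW ht).contDiffAt (atΩ hy)) hx,
    formAt_eq_contraction hW, hA.divergence_covDerivForm_contraction hx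
      (fun y hy => (contDiffOn_formAt hV.contDiffOn ht).contDiffAt (atΩ hy))
      (fun y hy => ((contDiffOn_tensorAt hU.contDiffOn ht).contDiffAt (atΩ hy)).differentiableAt
        two_ne_zero)
      (fun y hy => hg.covDerivTensor_eq_zero hU hy ht),
    ← divergence_congr hg.isOpen (hg.ricci_eqOn_covDerivForm hV ht) hx, contraction,
    Pi.neg_apply]
  simp only [mulVec, dotProduct, half, Finset.mul_sum]
  rw [Finset.sum_comm]
  refine congrArg Neg.neg (Finset.sum_congr rfl fun p _ => Finset.sum_congr rfl fun q _ => ?_)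
  rw [(hA.isSymm x hx).apply p q]
  simp only [tensorAt, of_apply]
  ring

end Contraction

end PseudoRicciFlow

end Flow

end CC

theorem contraction_soliton_equations_general {n : ℕ} {Ω : Set (Fin n → ℝ)} {T : ℝ}
    {g ginv : CC.Met n} (hg : CC.PseudoRicciFlow Ω T g ginv)
    {V : Fin n → CC.Fld n} (hV : CC.IsSolitonForm Ω T g ginv V)
    {U : CC.Met n} (hU : CC.IsParallelHeatSolution Ω T g ginv U) {W : Fin n → CC.Fld n}
    (hW : ∀ i, W i = fun x t => -(∑ j, ∑ k, U i j x t * ginv j k x t * V k x t)) :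
    ∀ x ∈ Ω, ∀ t ∈ Set.Ico (0 : ℝ) T,
      (∀ k i, CC.cd1 g ginv k W i x t =
        -(∑ j, ∑ l, U i j x t * ginv j l x t * CC.Ric g ginv k l x t)) ∧
      (∀ i, CC.tpd (W i) x t = CC.lap1 g ginv W i x t
        + (1 / 2) * ∑ p, ∑ q, ginv p q x t * CC.spd p (CC.Scal g ginv) x t * U i q x t) := by
  refine fun x hx t ht => ⟨hg.cd1_contraction hV hU hW hx ht, fun i => ?_⟩
  rw [hg.tpd_contraction hV hU hW hx ht, hg.lap1_contraction hV hU hW hx ht, neg_add_cancel]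

/-- equations (2.12), (2.14) of Chow–Chu. On a Ricci-flow
soliton background, if `U` is parallel, antisymmetric and satisfies the heat
equation, then `W = U ⌟ V` satisfies `∇_k W_i = −U_{ij}g^{jl}R_{kl}` and
`∂W_i/∂t = ΔW_i + ½ g^{pq} ∂_p R · U_{iq}`. -/
theorem contraction_soliton_equations (n : ℕ) (hn : 2 ≤ n)
    (Ωs : Set (Fin n → ℝ)) (T : ℝ)
    (g ginv : CC.Met n) (hg : CC.RicciFlow Ωs T g ginv)
    (V : Fin n → CC.Fld n)
    (hVsm : ∀ j, ContDiffOn ℝ (⊤ : ℕ∞)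
      (fun p : (Fin n → ℝ) × ℝ => V j p.1 p.2) (Ωs ×ˢ Set.Ico 0 T))
    (hclosed : ∀ x ∈ Ωs, ∀ t ∈ Set.Ico (0:ℝ) T, ∀ i j,
      CC.cd1 g ginv i V j x t = CC.cd1 g ginv j V i x t)
    (hsoliton : ∀ x ∈ Ωs, ∀ t ∈ Set.Ico (0:ℝ) T, ∀ i j,
      CC.Ric g ginv i j x t = CC.cd1 g ginv i V j x t)
    (hVev : ∀ x ∈ Ωs, ∀ t ∈ Set.Ico (0:ℝ) T, ∀ j,
      CC.tpd (V j) x t =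
        CC.lap1 g ginv V j x t
        - ∑ l, ∑ m, CC.Ric g ginv j l x t * ginv l m x t * V m x t)
    (U : Fin n → Fin n → CC.Fld n)
    (hUsm : ∀ i j, ContDiffOn ℝ (⊤ : ℕ∞)
      (fun p : (Fin n → ℝ) × ℝ => U i j p.1 p.2) (Ωs ×ˢ Set.Ico 0 T))
    (hUanti : ∀ x ∈ Ωs, ∀ t ∈ Set.Ico (0:ℝ) T, ∀ i j, U i j x t = - U j i x t)
    (hUpar : ∀ x ∈ Ωs, ∀ t ∈ Set.Ico (0:ℝ) T, ∀ k i j,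
      CC.cd2 g ginv k U i j x t = 0)
    (hUheat : ∀ x ∈ Ωs, ∀ t ∈ Set.Ico (0:ℝ) T, ∀ i j,
      CC.tpd (U i j) x t = CC.lap02 g ginv U i j x t)
    (W : Fin n → CC.Fld n)
    (hW : ∀ i, W i = fun x t => -(∑ j, ∑ k, U i j x t * ginv j k x t * V k x t)) :
    ∀ x ∈ Ωs, ∀ t ∈ Set.Ico (0:ℝ) T,
      -- (a)  `∇_k W_i = −U_{ij} g^{jl} R_{kl}`
      (∀ k i : Fin n,
        CC.cd1 g ginv k W i x t =
          -(∑ j, ∑ l, U i j x t * ginv j l x t * CC.Ric g ginv k l x t)) ∧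
      -- (b)  `∂W_i/∂t = ΔW_i + ½ g^{pq} ∂_p R · U_{iq}`
      (∀ i : Fin n,
        CC.tpd (W i) x t =
          CC.lap1 g ginv W i x t
          + (1/2) * ∑ p, ∑ q, ginv p q x t * CC.spd p (CC.Scal g ginv) x t * U i q x t) := by
  have smooth {u : CC.Fld n}
      (hu : ContDiffOn ℝ (⊤ : ℕ∞) (fun p : (Fin n → ℝ) × ℝ => u p.1 p.2) (Ωs ×ˢ Set.Ico 0 T)) :
      ContDiffOn ℝ 2 (fun p : (Fin n → ℝ) × ℝ => u p.1 p.2) (Ωs ×ˢ Set.Ico 0 T) :=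
    hu.of_le (WithTop.coe_le_coe.mpr le_top)
  exact contraction_soliton_equations_general hg.pseudoRicciFlow
    ⟨contDiffOn_pi.mpr fun j => smooth (hVsm j), hsoliton, hVev⟩
    ⟨CC.contDiffOn_matrix fun i j => smooth (hUsm i j), hUpar, hUheat⟩ hW
end
end
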